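/- Let 𝒫 = (P, μ, σ) be an n-dimensional system and let 𝔘_𝒫 = [min_{u ∈ ℳ^{exp,1}(P)} U_𝒫(u), U_𝒫(1_P)], where 1_P is the constant function 1 (the minimum is attained). Then for every U ∈ 𝔘_𝒫 there exists a unique equilibrium of internal μ-energy U, i.e. a unique u ∈ ℳ^{exp,1}(P) with U_𝒫(u) = U and S_𝒫(u) = sup{ S_𝒫(u') : u' ∈ ℳ^{exp,1}(P), U_𝒫(u') = U }. -/

import Mathlib

open MeasureTheory Filter Topology
open scoped ENNReal NNReal

noncomputable section

abbrev Euc (n : ℕ) := EuclideanSpace ℝ (Fin n)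

/-- A `[0,∞]`-valued function on a set `K ⊆ ℝⁿ` is convex if
`u((1−t)x+ty) ≤ (1−t)u(x)+t·u(y)` in `[0,∞]` for all `x, y ∈ K` and `t ∈ [0,1]`. -/
def ConvexFnOn {n : ℕ} (K : Set (Euc n)) (u : Euc n → ℝ≥0∞) : Prop :=
  ∀ ⦃x⦄, x ∈ K → ∀ ⦃y⦄, y ∈ K → ∀ ⦃t : ℝ⦄, 0 ≤ t → t ≤ 1 →
    u ((1 - t) • x + t • y) ≤ ENNReal.ofReal (1 - t) * u x + ENNReal.ofReal t * u y

/-- A polytope: a compact set with nonempty interior which is a finite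
intersection of closed half-spaces (cut out by nonzero affine functions). -/
def IsPolytope {n : ℕ} (P : Set (Euc n)) : Prop :=
  IsCompact P ∧ (interior P).Nonempty ∧
    ∃ (m : ℕ) (L : Fin m → (Euc n →ᵃ[ℝ] ℝ)),
      (∀ k, L k ≠ 0) ∧ P = ⋂ k, {x | 0 ≤ L k x}

/-- `F` is a face of `P`: the intersection of `P` with the zero locus of a
nonzero affine function that is nonnegative on `P`. -/
def IsFaceOf {n : ℕ} (P F : Set (Euc n)) : Prop :=
  ∃ ℓ : Euc n →ᵃ[ℝ] ℝ, ℓ ≠ 0 ∧ (∀ y ∈ P, 0 ≤ ℓ y) ∧ F = {y ∈ P | ℓ y = 0}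

/-- A facet: a face spanning an affine subspace of dimension `n − 1`. -/
def IsFacetOf {n : ℕ} (P F : Set (Euc n)) : Prop :=
  IsFaceOf P F ∧ Module.finrank ℝ (vectorSpan ℝ F) + 1 = n

/-- A simple polytope: every vertex lies on exactly `n` facets. -/
def IsSimplePolytope {n : ℕ} (P : Set (Euc n)) : Prop :=
  IsPolytope P ∧ ∀ v : Euc n, IsFaceOf P {v} →
    {F : Set (Euc n) | IsFacetOf P F ∧ v ∈ F}.ncard = n

/-- An `n`-dimensional system `𝒫 = (P, μ, σ)`: a simple polytope `P ⊆ ℝⁿ`, a flat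
measure `μ` on `P` (a positive constant multiple of Lebesgue measure restricted
to `P`), and a flat measure `σ` on `∂P` (supported on the boundary and, on each
facet, a positive constant multiple of `(n−1)`-dimensional Hausdorff measure). -/
structure NSystem (n : ℕ) where
  P : Set (Euc n)
  μ : Measure (Euc n)
  σ : Measure (Euc n)
  simple : IsSimplePolytope P
  flat : ∃ c : ℝ, 0 < c ∧ μ = ENNReal.ofReal c • volume.restrict P
  bdry_supp : σ (frontier P)ᶜ = 0
  flat_bdry : ∀ F : Set (Euc n), IsFacetOf P F →
    ∃ c : ℝ, 0 < c ∧ σ.restrict F =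
      ENNReal.ofReal c • (Measure.hausdorffMeasure ((n : ℝ) - 1)).restrict F

/-- `y log y`, computed via the real value of `y ∈ [0,∞]`. -/
def xlogx (y : ℝ≥0∞) : ℝ := y.toReal * Real.log y.toReal

/-- `∫_A u log u dμ ∈ (−∞, ∞]`, as an extended real number. -/
def entOn {n : ℕ} (μ : Measure (Euc n)) (A : Set (Euc n)) (u : Euc n → ℝ≥0∞) : EReal :=
  ((∫⁻ x in A, ENNReal.ofReal (xlogx (u x)) ∂μ : ℝ≥0∞) : EReal)
    - ((∫⁻ x in A, ENNReal.ofReal (-(xlogx (u x))) ∂μ : ℝ≥0∞) : EReal)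

/-- `u : P → (0,∞]` is log-convex: `u((1−t)x+ty) ≤ u(x)^{1−t} u(y)^t`. -/
def LogConvexOn {n : ℕ} (P : Set (Euc n)) (u : Euc n → ℝ≥0∞) : Prop :=
  ∀ ⦃x⦄, x ∈ P → ∀ ⦃y⦄, y ∈ P → ∀ ⦃t : ℝ⦄, 0 ≤ t → t ≤ 1 →
    u ((1 - t) • x + t • y) ≤ u x ^ (1 - t) * u y ^ t

/-- `ℳ^{exp,p}(P)`: lower semi-continuous log-convex `u : P → (0,∞]` with
`∫_P u dμ = μ(P)` and `∫_P u^p dμ < ∞`. -/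
def MExp {n : ℕ} (S : NSystem n) (p : ℝ) : Set (Euc n → ℝ≥0∞) :=
  {u | LowerSemicontinuousOn u S.P ∧ (∀ x ∈ S.P, 0 < u x) ∧ LogConvexOn S.P u ∧
    (∫⁻ x in S.P, u x ∂S.μ) = S.μ S.P ∧ (∫⁻ x in S.P, u x ^ p ∂S.μ) < ⊤}

/-- The nonequilibrium entropy `S_𝒫(u) = −(1/μ(P)) ∫_P u log u dμ ∈ [−∞, 0]`. -/
def Spf {n : ℕ} (S : NSystem n) (u : Euc n → ℝ≥0∞) : EReal :=
  (((S.μ S.P).toReal⁻¹ : ℝ) : EReal) *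
    (((∫⁻ x in S.P, ENNReal.ofReal (-(xlogx (u x))) ∂S.μ : ℝ≥0∞) : EReal)
      - ((∫⁻ x in S.P, ENNReal.ofReal (xlogx (u x)) ∂S.μ : ℝ≥0∞) : EReal))

/-- The internal μ-energy `U_𝒫(u) = (1/μ(P)) ∫_{∂P} u dσ ∈ (0, ∞]`. -/
def Upf {n : ℕ} (S : NSystem n) (u : Euc n → ℝ≥0∞) : ℝ≥0∞ :=
  (S.μ S.P)⁻¹ * ∫⁻ x in frontier S.P, u x ∂S.σ

/-- The free μ-energy `F_𝒫(T,u) = U_𝒫(u) − T·S_𝒫(u)` if `S_𝒫(u) > −∞`, else `∞`. -/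
def Fpf {n : ℕ} (S : NSystem n) (T : ℝ) (u : Euc n → ℝ≥0∞) : EReal :=
  if Spf S u = ⊥ then ⊤ else (Upf S u : EReal) - (T : EReal) * Spf S u

/-- `u` is the μ-canonical distribution of temperature `T ≥ 0`: for `T > 0` the
minimizer of `F_𝒫(T,·)` on `ℳ^{exp,1}(P)`; for `T = 0` the minimizer of `U_𝒫`
maximizing `S_𝒫` among all minimizers of `U_𝒫`. -/
def IsCanonical {n : ℕ} (S : NSystem n) (T : ℝ) (u : Euc n → ℝ≥0∞) : Prop :=
  u ∈ MExp S 1 ∧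
  (0 < T → ∀ u' ∈ MExp S 1, Fpf S T u ≤ Fpf S T u') ∧
  (T = 0 → (∀ u' ∈ MExp S 1, Upf S u ≤ Upf S u') ∧
    ∀ u' ∈ MExp S 1, (∀ u'' ∈ MExp S 1, Upf S u' ≤ Upf S u'') → Spf S u' ≤ Spf S u)

open Module (finrank)
open InformationTheory (klFun klFun_apply klFun_nonneg klFun_one measurable_klFun
  continuous_klFun strictConvexOn_klFun)

/-!
The measure `μ` is dominated by a cone over `(∂P, σ)` with apex an interior point `x₀`. Densities
are bounded at `x₀`, and log-convexity on the segments from `x₀` to `∂P` bounds the integral of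
`u log u` on each of them by the value of `u` at its end: a bound on the energy is a bound on the
entropy. Sequences of bounded energy are therefore uniformly integrable. By Helly selection a
subsequence converges in the interior, and the limit is extended to the boundary by extrapolating
log-affinely along rays, which keeps it lower semicontinuous and below the `liminf` there. The
limit may lose energy, but mixing it with the constant `1` restores the energy without lowering
the entropy. Uniqueness is the strict convexity of `y log y`; a density is determined by its
values almost everywhere because it is continuous in the interior and equal to its own radial
extrapolation.
-/

/-! ### Affine functions and polytopes -/

section AffineFunction

variable {E : Type*} [NormedAddCommGroup E] [NormedSpace ℝ E]

lemma exists_mem_segment_mem_frontier {s : Set E} {x z : E} (hx : x ∈ s) (hz : z ∉ s) :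
    ∃ y ∈ segment ℝ x z, y ∈ frontier s := by
  by_contra! h
  have hcover : segment ℝ x z ⊆ interior s ∪ (closure s)ᶜ := fun y hy => by
    by_cases hyi : y ∈ interior s
    · exact Or.inl hyi
    · exact Or.inr fun hyc => h y hy ⟨hyc, hyi⟩
  obtain ⟨y, -, hyi, hyc⟩ := (convex_segment x z).isPreconnected _ _ isOpen_interior
    isClosed_closure.isOpen_compl hcover
    ⟨x, left_mem_segment ℝ x z, (hcover (left_mem_segment ℝ x z)).resolve_right
      fun hn => hn (subset_closure hx)⟩
    ⟨z, right_mem_segment ℝ x z, (hcover (right_mem_segment ℝ x z)).resolve_left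
      fun hn => hz (interior_subset hn)⟩
  exact hyc (subset_closure (interior_subset hyi))

lemma exists_mem_frontier_mem_segment {s : Set E} (hs : Bornology.IsBounded s) {x₀ x : E}
    (hx : x ∈ s) (hne : x ≠ x₀) : ∃ y ∈ frontier s, x ∈ segment ℝ x₀ y := by
  obtain ⟨R, hR⟩ := hs.subset_closedBall x₀
  have hd : 0 < ‖x - x₀‖ := norm_pos_iff.2 (sub_ne_zero.2 hne)
  set T : ℝ := 1 + (|R| + 1) / ‖x - x₀‖
  have hT : 1 ≤ T := le_add_of_nonneg_right (by positivity)
  have hfar : AffineMap.lineMap x₀ x T ∉ s := fun h => by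
    have hdist := hR h
    rw [Metric.mem_closedBall, dist_lineMap_left, Real.norm_of_nonneg (by linarith), dist_comm,
      dist_eq_norm, add_mul, div_mul_cancel₀ _ hd.ne'] at hdist
    linarith [le_abs_self R]
  obtain ⟨y, hy, hyf⟩ := exists_mem_segment_mem_frontier hx hfar
  refine ⟨y, hyf, ?_⟩
  rw [segment_eq_image_lineMap] at hy ⊢
  obtain ⟨θ, hθ, rfl⟩ := hy
  set r : ℝ := 1 + θ * (T - 1)
  have hr : 1 ≤ r := le_add_of_nonneg_right (mul_nonneg hθ.1 (by linarith))
  refine ⟨r⁻¹, ⟨by positivity, inv_le_one_of_one_le₀ hr⟩, ?_⟩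
  have hy : AffineMap.lineMap x (AffineMap.lineMap x₀ x T) θ = x₀ + r • (x - x₀) := by
    simp only [AffineMap.lineMap_apply_module, r]; module
  rw [hy, AffineMap.lineMap_apply_module', add_sub_cancel_left, smul_smul,
    inv_mul_cancel₀ (by positivity), one_smul, sub_add_cancel]

lemma pos_of_mem_interior_of_nonneg {P : Set E} {ℓ : E →ᵃ[ℝ] ℝ} (hℓ : ℓ ≠ 0)
    (hnonneg : ∀ y ∈ P, 0 ≤ ℓ y) {x : E} (hx : x ∈ interior P) : 0 < ℓ x := by
  by_cases hlin : ℓ.linear = 0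
  · obtain ⟨c, rfl⟩ := (AffineMap.linear_eq_zero_iff_exists_const ℓ).1 hlin
    refine (hnonneg x (interior_subset hx)).lt_of_ne fun h => hℓ ?_
    ext
    exact h.symm
  · have hopen : IsOpenMap ℓ := AffineMap.isOpenMap_linear_iff.1
      (ℓ.linear.isOpenMap_of_finiteDimensional (LinearMap.surjective hlin))
    have himage : ℓ '' P ⊆ Set.Ici 0 := Set.image_subset_iff.2 hnonneg
    have := interior_mono himage (hopen.image_interior_subset P (Set.mem_image_of_mem ℓ hx))
    rwa [interior_Ici] at this

lemma mem_of_mem_segment_of_mem_of_mem {A : AffineSubspace ℝ E} {x w z : E} (hw : w ∈ segment ℝ x z)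
    (hwA : w ∈ A) (hzA : z ∈ A) (hne : w ≠ z) : x ∈ A := by
  rw [segment_eq_image_lineMap] at hw
  obtain ⟨t, -, rfl⟩ := hw
  have ht : 1 - t ≠ 0 := fun h => hne (by rw [← sub_eq_zero.1 h, AffineMap.lineMap_apply_one])
  have hx : AffineMap.lineMap z (AffineMap.lineMap x z t) (1 - t)⁻¹ = x := by
    rw [← AffineMap.lineMap_apply_one_sub z x t, AffineMap.lineMap_lineMap_right,
      inv_mul_cancel₀ ht, AffineMap.lineMap_apply_one]
  exact hx ▸ AffineMap.lineMap_mem _ hzA hwA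

end AffineFunction

section Face

variable {n : ℕ} {P F : Set (Euc n)}

lemma IsFaceOf.subset (hF : IsFaceOf P F) : F ⊆ P := by
  obtain ⟨ℓ, -, -, rfl⟩ := hF
  exact Set.sep_subset _ _

lemma IsFaceOf.isClosed (hF : IsFaceOf P F) (hP : IsClosed P) : IsClosed F := by
  obtain ⟨ℓ, -, -, rfl⟩ := hF
  exact hP.inter (isClosed_eq ℓ.continuous_of_finiteDimensional continuous_const)

lemma IsFaceOf.subset_frontier (hF : IsFaceOf P F) : F ⊆ frontier P := by
  obtain ⟨ℓ, hℓ, hnonneg, rfl⟩ := hF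
  rintro x ⟨hxP, hx⟩
  exact ⟨subset_closure hxP, fun hi => (pos_of_mem_interior_of_nonneg hℓ hnonneg hi).ne' hx⟩

lemma IsFaceOf.affineSpan_ne_top (hF : IsFaceOf P F) (hP : (interior P).Nonempty) :
    affineSpan ℝ F ≠ ⊤ := by
  obtain ⟨x, hx⟩ := hP
  obtain ⟨ℓ, hℓ, hnonneg, rfl⟩ := hF
  intro htop
  have hzero : Set.EqOn ℓ (0 : Euc n →ᵃ[ℝ] ℝ) (affineSpan ℝ {y ∈ P | ℓ y = 0}) :=
    AffineMap.eqOn_affineSpan fun y hy => hy.2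
  exact (pos_of_mem_interior_of_nonneg hℓ hnonneg hx).ne'
    (hzero (htop ▸ AffineSubspace.mem_top ℝ _ x))

lemma IsFaceOf.volume_affineSpan_insert_of_not_isFacetOf (hF : IsFaceOf P F)
    (hP : (interior P).Nonempty) (hne : F.Nonempty) (hnot : ¬ IsFacetOf P F) (z : Euc n) :
    volume (affineSpan ℝ (insert z F) : Set (Euc n)) = 0 := by
  refine Measure.addHaar_affineSubspace _ _ fun htop => ?_
  have hinsert : finrank ℝ (vectorSpan ℝ (insert z F)) = n := by
    rw [← direction_affineSpan, htop, AffineSubspace.direction_top, finrank_top,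
      finrank_euclideanSpace_fin]
  have hproper : finrank ℝ (vectorSpan ℝ F) < n := by
    rw [← direction_affineSpan]
    refine (Submodule.finrank_lt fun h => hF.affineSpan_ne_top hP ?_).trans_eq
      finrank_euclideanSpace_fin
    exact (AffineSubspace.direction_eq_top_iff_of_nonempty ((affineSpan_nonempty ℝ).2 hne)).1 h
  have hstep := finrank_vectorSpan_insert_le_set (k := ℝ) F z
  exact hnot ⟨hF, by omega⟩

end Face

namespace IsPolytope

variable {n : ℕ} {P : Set (Euc n)}

lemma convex (hP : IsPolytope P) : Convex ℝ P := by
  obtain ⟨-, -, m, L, -, rfl⟩ := hP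
  exact convex_iInter fun k => (convex_Ici (0 : ℝ)).affine_preimage (L k)

lemma exists_finite_faces (hP : IsPolytope P) :
    ∃ 𝓕 : Set (Set (Euc n)), 𝓕.Finite ∧ (∀ F ∈ 𝓕, IsFaceOf P F) ∧ frontier P ⊆ ⋃₀ 𝓕 := by
  obtain ⟨hc, -, m, L, hL, hPL⟩ := hP
  have hnonneg : ∀ k, ∀ y ∈ P, 0 ≤ L k y := fun k y hy => Set.mem_iInter.1 (hPL ▸ hy) k
  refine ⟨Set.range fun k => {y ∈ P | L k y = 0}, Set.finite_range _,
    Set.forall_mem_range.2 fun k => ⟨L k, hL k, hnonneg k, rfl⟩, fun y hy => ?_⟩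
  by_contra hout
  have hyP := hc.isClosed.frontier_subset hy
  have hpos : ∀ k, 0 < L k y := fun k => (hnonneg k y hyP).lt_of_ne fun h =>
    hout ⟨_, Set.mem_range_self k, hyP, h.symm⟩
  have hopen : IsOpen (⋂ k, {x | 0 < L k x}) := isOpen_iInter_of_finite fun k =>
    isOpen_lt continuous_const (L k).continuous_of_finiteDimensional
  have hsub : (⋂ k, {x | 0 < L k x}) ⊆ P :=
    hPL ▸ Set.iInter_mono fun k x (hx : 0 < L k x) => hx.le
  exact hy.2 (interior_maximal hsub hopen (Set.mem_iInter.2 hpos))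

/- Near a frontier point missed by all facets, joining interior points to an exterior point `z`
would cover an open set by the null sets spanned by `z` and the faces that are not facets. -/
lemma exists_finite_facets (hP : IsPolytope P) :
    ∃ 𝓕 : Set (Set (Euc n)), 𝓕.Finite ∧ (∀ F ∈ 𝓕, IsFacetOf P F) ∧ frontier P ⊆ ⋃₀ 𝓕 := by
  obtain ⟨𝓕, hfin, hface, hcover⟩ := hP.exists_finite_faces
  have hclosed := hP.1.isClosed
  refine ⟨{F ∈ 𝓕 | IsFacetOf P F}, hfin.subset (Set.sep_subset _ _), fun F hF => hF.2,
    fun y hy => ?_⟩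
  by_contra hout
  have hKclosed : IsClosed (⋃₀ {F ∈ 𝓕 | IsFacetOf P F}) :=
    Set.sUnion_eq_biUnion ▸ (hfin.subset (Set.sep_subset _ _)).isClosed_biUnion fun F hF =>
      (hface F hF.1).isClosed hclosed
  obtain ⟨ε, hε, hball⟩ := Metric.isOpen_iff.1 hKclosed.isOpen_compl y hout
  obtain ⟨z, hzball, hzP⟩ := mem_closure_iff.1 (frontier_compl P ▸ hy).1 _ Metric.isOpen_ball
    (Metric.mem_ball_self hε)
  have hyi : y ∈ closure (interior P) := by
    rw [hP.convex.closure_interior_eq_closure_of_nonempty_interior hP.2.1]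
    exact hy.1
  have hsub : Metric.ball y ε ∩ interior P ⊆ ⋃ F ∈ {F ∈ 𝓕 | ¬ IsFacetOf P F ∧ F.Nonempty},
      (affineSpan ℝ (insert z F) : Set (Euc n)) := by
    rintro x ⟨hxball, hxP⟩
    obtain ⟨w, hw, hwf⟩ := exists_mem_segment_mem_frontier (interior_subset hxP) hzP
    obtain ⟨F, hF, hwF⟩ := hcover hwf
    have hnot : ¬ IsFacetOf P F := fun h =>
      hball ((convex_ball y ε).segment_subset hxball hzball hw) ⟨F, ⟨hF, h⟩, hwF⟩
    exact Set.mem_biUnion ⟨hF, hnot, w, hwF⟩ (mem_of_mem_segment_of_mem_of_mem hw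
      (subset_affineSpan ℝ _ (Set.mem_insert_of_mem _ hwF))
      (subset_affineSpan ℝ _ (Set.mem_insert _ _))
      fun h => hzP (h ▸ (hface F hF).subset hwF))
  have hnull : volume (Metric.ball y ε ∩ interior P) = 0 :=
    measure_mono_null hsub <| (measure_biUnion_null_iff
      (hfin.subset (Set.sep_subset _ _)).countable).2 fun F hF =>
        (hface F hF.1).volume_affineSpan_insert_of_not_isFacetOf hP.2.1 hF.2.2 hF.2.1 z
  exact ((Metric.isOpen_ball.inter isOpen_interior).measure_pos volume
    (mem_closure_iff.1 hyi _ Metric.isOpen_ball (Metric.mem_ball_self hε))).ne' hnull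

end IsPolytope

/-! ### Polar coordinates over a hyperplane -/

section Cone

variable {E : Type*} [NormedAddCommGroup E] [NormedSpace ℝ E]

lemma continuous_lineMap_uncurry (x₀ : E) :
    Continuous fun q : E × ℝ => AffineMap.lineMap x₀ q.1 q.2 := by
  simp only [AffineMap.lineMap_apply_module]
  fun_prop

lemma isCompact_convexJoin_singleton {F : Set E} (hF : IsCompact F) (x₀ : E) :
    IsCompact (convexJoin ℝ {x₀} F) := by
  have : convexJoin ℝ {x₀} F =
      (fun q : E × ℝ => AffineMap.lineMap x₀ q.1 q.2) '' F ×ˢ Set.Icc 0 1 := by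
    ext x
    simp only [mem_convexJoin, segment_eq_image_lineMap, Set.mem_singleton_iff, exists_eq_left,
      Set.mem_image, Set.mem_prod, Prod.exists]
    grind
  exact this ▸ (hF.prod isCompact_Icc).image (continuous_lineMap_uncurry x₀)

variable [MeasurableSpace E]

/-- The image of `ν ⊗ ds`, `0 < s ≤ 1`, under `(y, s) ↦ (1 - s) x₀ + s y`: the measure that spreads
the mass of `ν` at `y` uniformly along the segment from `x₀` to `y`. -/
def coneMeasure (x₀ : E) (ν : Measure E) : Measure E :=
  (ν.prod (volume.restrict (Set.Ioc (0 : ℝ) 1))).map fun q => AffineMap.lineMap x₀ q.1 q.2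

lemma coneMeasure_smul (x₀ : E) (c : ℝ≥0) (ν : Measure E) :
    coneMeasure x₀ (c • ν) = c • coneMeasure x₀ ν := by
  rw [coneMeasure, Measure.prod_smul_left, Measure.map_smul, coneMeasure]

variable [BorelSpace E]

lemma lintegral_coneMeasure (x₀ : E) (ν : Measure E) {g : E → ℝ≥0∞} (hg : Measurable g) :
    ∫⁻ x, g x ∂coneMeasure x₀ ν =
      ∫⁻ y, (∫⁻ s in Set.Ioc (0 : ℝ) 1, g (AffineMap.lineMap x₀ y s)) ∂ν := by
  have hmeas := (continuous_lineMap_uncurry x₀).measurable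
  rw [coneMeasure, lintegral_map hg hmeas]
  exact lintegral_prod _ (hg.comp hmeas).aemeasurable

lemma coneMeasure_mono (x₀ : E) {ν ν' : Measure E} (h : ν ≤ ν') :
    coneMeasure x₀ ν ≤ coneMeasure x₀ ν' := by
  refine Measure.le_iff.2 fun A hA => ?_
  have hind : Measurable (A.indicator (1 : E → ℝ≥0∞)) := measurable_one.indicator hA
  rw [← lintegral_indicator_one hA, ← lintegral_indicator_one hA, lintegral_coneMeasure _ _ hind,
    lintegral_coneMeasure _ _ hind]
  exact lintegral_mono' h le_rfl

end Cone

section Hyperplane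

variable {E : Type*} [NormedAddCommGroup E] [NormedSpace ℝ E] {ℓ : E →ᵃ[ℝ] ℝ}

lemma lineMap_mem_convexJoin_singleton {x₀ y : E} {F : Set E} (hx₀ : ℓ x₀ ≠ 0)
    (hℓF : ∀ y ∈ F, ℓ y = 0) (hy : ℓ y = 0) {s : ℝ} (hs : s ≠ 0)
    (h : AffineMap.lineMap x₀ y s ∈ convexJoin ℝ {x₀} F) : s ∈ Set.Ioc (0 : ℝ) 1 ∧ y ∈ F := by
  obtain ⟨_, rfl, y', hy', h⟩ := mem_convexJoin.1 h
  rw [segment_eq_image_lineMap] at h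
  obtain ⟨t, ht, h⟩ := h
  obtain rfl : t = s := by
    simpa [AffineMap.apply_lineMap, hℓF y' hy', hy, hx₀] using congrArg ℓ h
  have hyy' : y' = y := by
    simpa [AffineMap.lineMap_apply_module, hs] using h
  exact ⟨⟨ht.1.lt_of_ne' hs, ht.2⟩, hyy' ▸ hy'⟩

lemma isometry_add_ker_linear (ℓ : E →ᵃ[ℝ] ℝ) (p : E) :
    Isometry fun v : LinearMap.ker ℓ.linear => (v : E) + p :=
  Isometry.of_dist_eq fun a b => by simp [dist_eq_norm]

lemma range_add_ker_linear {p : E} (hp : ℓ p = 0) :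
    Set.range (fun v : LinearMap.ker ℓ.linear => (v : E) + p) = {y | ℓ y = 0} := by
  ext y
  constructor
  · rintro ⟨v, rfl⟩
    have := ℓ.map_vadd p (v : E)
    simpa [hp] using this
  · intro hy
    have hker : ℓ.linear (y - p) = 0 := by
      rw [← vsub_eq_sub, ℓ.linearMap_vsub, hp, show ℓ y = 0 from hy, vsub_self]
    exact ⟨⟨y - p, hker⟩, sub_add_cancel y p⟩

lemma hausdorffMeasure_restrict_zero_set [MeasurableSpace E] [BorelSpace E] {p : E}
    (hp : ℓ p = 0) {d : ℝ} (hd : 0 ≤ d) :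
    (Measure.hausdorffMeasure d).restrict {y | ℓ y = 0} =
      (Measure.hausdorffMeasure d).map fun v : LinearMap.ker ℓ.linear => (v : E) + p := by
  rw [(isometry_add_ker_linear ℓ p).map_hausdorffMeasure (Or.inl hd), range_add_ker_linear hp]

variable [FiniteDimensional ℝ E]

lemma exists_continuousLinearEquiv_ker_prod {f : E →ₗ[ℝ] ℝ} {w : E} (hw : f w ≠ 0) :
    ∃ Λ : (LinearMap.ker f × ℝ) ≃L[ℝ] E, ∀ q, Λ q = (q.1 : E) + q.2 • w := by
  let Λ₀ : (LinearMap.ker f × ℝ) →ₗ[ℝ] E :=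
    (LinearMap.ker f).subtype.coprod (LinearMap.toSpanSingleton ℝ E w)
  have hΛ₀ : ∀ q, Λ₀ q = (q.1 : E) + q.2 • w := fun q => by simp [Λ₀]
  have hinj : Function.Injective Λ₀ := by
    refine (injective_iff_map_eq_zero _).2 fun q hq => ?_
    rw [hΛ₀] at hq
    have hs : q.2 = 0 := by simpa [LinearMap.mem_ker.1 q.1.2, hw] using congrArg f hq
    exact Prod.ext (Subtype.ext (by simpa [hs] using hq)) hs
  have hf : f ≠ 0 := fun h => hw (by rw [h, LinearMap.zero_apply])
  have hrank : finrank ℝ (LinearMap.ker f × ℝ) = finrank ℝ E := by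
    rw [Module.finrank_prod, Module.finrank_self, Module.Dual.finrank_ker_add_one_of_ne_zero hf]
  exact ⟨(LinearEquiv.ofInjectiveOfFinrankEq Λ₀ hinj hrank).toContinuousLinearEquiv, hΛ₀⟩

variable [MeasurableSpace E] [BorelSpace E]

lemma lintegral_eq_ofReal_mul_lintegral_smul (ν : Measure E) [ν.IsAddHaarMeasure]
    {s : ℝ} (hs : s ≠ 0) {g : E → ℝ≥0∞} (hg : Measurable g) :
    ∫⁻ v, g v ∂ν = ENNReal.ofReal |s ^ finrank ℝ E| * ∫⁻ v, g (s • v) ∂ν := by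
  rw [← lintegral_map hg (measurable_const_smul s), Measure.map_addHaar_smul ν hs,
    lintegral_smul_measure, smul_eq_mul, ← mul_assoc, ← ENNReal.ofReal_mul (abs_nonneg _),
    ← abs_mul, mul_inv_cancel₀ (pow_ne_zero _ hs), abs_one, ENNReal.ofReal_one, one_mul]

lemma hausdorffMeasure_lt_top_of_isBounded {F : Set E} (hF : Bornology.IsBounded F)
    (hℓF : ∀ y ∈ F, ℓ y = 0) :
    Measure.hausdorffMeasure (finrank ℝ (LinearMap.ker ℓ.linear)) F < ⊤ := by
  rcases F.eq_empty_or_nonempty with rfl | ⟨p, hp⟩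
  · simp
  have hι := isometry_add_ker_linear ℓ p
  rw [← Set.inter_eq_left.2 (show F ⊆ {y | ℓ y = 0} from hℓF), ← range_add_ker_linear (hℓF p hp),
    ← hι.hausdorffMeasure_preimage (Or.inl (Nat.cast_nonneg _))]
  exact (hι.antilipschitz.isBounded_preimage hF).measure_lt_top

lemma exists_lintegral_eq_lintegral_polar (μ : Measure E) [μ.IsAddHaarMeasure] {x₀ p : E}
    (hx₀ : ℓ x₀ ≠ 0) (hp : ℓ p = 0) :
    ∃ C : ℝ≥0, ∀ g : E → ℝ≥0∞, Measurable g → ∫⁻ x, g x ∂μ =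
      C * ∫⁻ s : ℝ, ENNReal.ofReal |s ^ finrank ℝ (LinearMap.ker ℓ.linear)| *
        ∫⁻ y in {y | ℓ y = 0}, g (AffineMap.lineMap x₀ y s)
          ∂Measure.hausdorffMeasure (finrank ℝ (LinearMap.ker ℓ.linear)) := by
  set V := LinearMap.ker ℓ.linear
  set ν : Measure V := Measure.hausdorffMeasure (finrank ℝ V)
  have hw : ℓ.linear (p - x₀) ≠ 0 := by
    rw [← vsub_eq_sub, ℓ.linearMap_vsub, hp, vsub_eq_sub, zero_sub]
    exact neg_ne_zero.2 hx₀
  obtain ⟨Λ, hΛ⟩ := exists_continuousLinearEquiv_ker_prod hw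
  refine ⟨μ.addHaarScalarFactor ((ν.prod volume).map Λ), fun g hg => ?_⟩
  have hΛm := Λ.continuous.measurable
  have hgΛ : Measurable fun q => g (x₀ + Λ q) := hg.comp (hΛm.const_add x₀)
  have hslice : ∀ s : ℝ, s ≠ 0 → ∫⁻ v, g (x₀ + Λ (v, s)) ∂ν = ENNReal.ofReal |s ^ finrank ℝ V| *
      ∫⁻ y in {y | ℓ y = 0}, g (AffineMap.lineMap x₀ y s)
        ∂Measure.hausdorffMeasure (finrank ℝ V) := by
    intro s hs
    have hline : Measurable fun y : E => g (AffineMap.lineMap x₀ y s) :=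
      hg.comp ((continuous_lineMap_uncurry x₀).comp (Continuous.prodMk_left s)).measurable
    rw [lintegral_eq_ofReal_mul_lintegral_smul ν hs (g := fun v => g (x₀ + Λ (v, s)))
        (hgΛ.comp measurable_prodMk_right),
      hausdorffMeasure_restrict_zero_set hp (Nat.cast_nonneg _),
      lintegral_map hline (isometry_add_ker_linear ℓ p).continuous.measurable]
    congr! 4 with v
    rw [hΛ, AffineMap.lineMap_apply_module, Submodule.coe_smul]
    module
  have hhaar := Measure.isAddLeftInvariant_eq_smul μ ((ν.prod volume).map Λ)
  calc ∫⁻ x, g x ∂μ = ∫⁻ x, g (x₀ + x) ∂μ := (lintegral_add_left_eq_self g x₀).symm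
    _ = μ.addHaarScalarFactor ((ν.prod volume).map Λ) *
          ∫⁻ q, g (x₀ + Λ q) ∂ν.prod volume := by
        conv_lhs => rw [hhaar]
        rw [lintegral_smul_measure, lintegral_map (f := fun x => g (x₀ + x))
            (hg.comp (measurable_const_add x₀)) hΛm,
          ENNReal.smul_def, smul_eq_mul]
    _ = _ := by
        rw [lintegral_prod_symm' _ hgΛ]
        congr 1
        refine lintegral_congr_ae ?_
        filter_upwards [Measure.ae_ne volume (0 : ℝ)] with s hs using hslice s hs

lemma lintegral_indicator_convexJoin_le {x₀ : E} {F : Set E} (hF : MeasurableSet F)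
    (hx₀ : ℓ x₀ ≠ 0) (hℓF : ∀ y ∈ F, ℓ y = 0) (ν : Measure E) (A : Set E) {s : ℝ} (hs : s ≠ 0) :
    ∫⁻ y in {y | ℓ y = 0},
        (A ∩ convexJoin ℝ {x₀} F).indicator 1 (AffineMap.lineMap x₀ y s) ∂ν ≤
      (Set.Ioc (0 : ℝ) 1).indicator
        (fun s => ∫⁻ y in F, A.indicator 1 (AffineMap.lineMap x₀ y s) ∂ν) s := by
  have hH : MeasurableSet {y | ℓ y = 0} :=
    (isClosed_eq ℓ.continuous_of_finiteDimensional continuous_const).measurableSet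
  by_cases hIoc : s ∈ Set.Ioc (0 : ℝ) 1
  · rw [Set.indicator_of_mem hIoc, ← lintegral_indicator hF]
    refine (setLIntegral_mono' hH fun y hy => ?_).trans (setLIntegral_le_lintegral {y | ℓ y = 0} _)
    by_cases h : AffineMap.lineMap x₀ y s ∈ A ∩ convexJoin ℝ {x₀} F
    · rw [Set.indicator_of_mem (lineMap_mem_convexJoin_singleton hx₀ hℓF hy hs h.2).2,
        Set.indicator_of_mem h, Set.indicator_of_mem h.1]
    · rw [Set.indicator_of_notMem h]
      exact zero_le
  · rw [Set.indicator_of_notMem hIoc, nonpos_iff_eq_zero]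
    refine setLIntegral_eq_zero hH fun y hy => Set.indicator_of_notMem ?_ _
    exact fun h => hIoc (lineMap_mem_convexJoin_singleton hx₀ hℓF hy hs h.2).1

lemma exists_restrict_convexJoin_le_coneMeasure (μ : Measure E) [μ.IsAddHaarMeasure] {x₀ : E}
    {F : Set E} (hF : IsCompact F) (hx₀ : ℓ x₀ ≠ 0) (hℓF : ∀ y ∈ F, ℓ y = 0) :
    ∃ C : ℝ≥0, μ.restrict (convexJoin ℝ {x₀} F) ≤ C • coneMeasure x₀
      ((Measure.hausdorffMeasure (finrank ℝ (LinearMap.ker ℓ.linear))).restrict F) := by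
  rcases F.eq_empty_or_nonempty with rfl | ⟨p, hp⟩
  · exact ⟨0, by simp⟩
  set d := finrank ℝ (LinearMap.ker ℓ.linear)
  set ν : Measure E := Measure.hausdorffMeasure d
  obtain ⟨C, hC⟩ := exists_lintegral_eq_lintegral_polar μ hx₀ (hℓF p hp)
  refine ⟨C, Measure.le_iff.2 fun A hA => ?_⟩
  have hA1 : Measurable (A.indicator (1 : E → ℝ≥0∞)) := measurable_one.indicator hA
  have hAJ := hA.inter (isCompact_convexJoin_singleton hF x₀).measurableSet
  have : IsFiniteMeasure (ν.restrict F) :=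
    ⟨by simpa using hausdorffMeasure_lt_top_of_isBounded hF.isBounded hℓF⟩
  calc μ.restrict (convexJoin ℝ {x₀} F) A
      = C * ∫⁻ s : ℝ, ENNReal.ofReal |s ^ d| * ∫⁻ y in {y | ℓ y = 0},
          (A ∩ convexJoin ℝ {x₀} F).indicator 1 (AffineMap.lineMap x₀ y s) ∂ν := by
        rw [Measure.restrict_apply hA, ← lintegral_indicator_one hAJ,
          hC _ (measurable_one.indicator hAJ)]
    _ ≤ C * ∫⁻ s in Set.Ioc (0 : ℝ) 1, ∫⁻ y in F,
          A.indicator 1 (AffineMap.lineMap x₀ y s) ∂ν := by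
        rw [← lintegral_indicator measurableSet_Ioc]
        refine mul_le_mul_right (lintegral_mono_ae ?_) _
        filter_upwards [Measure.ae_ne volume (0 : ℝ)] with s hs
        refine (mul_le_mul_right
          (lintegral_indicator_convexJoin_le hF.measurableSet hx₀ hℓF ν A hs) _).trans ?_
        by_cases hIoc : s ∈ Set.Ioc (0 : ℝ) 1
        · refine mul_le_of_le_one_left' (ENNReal.ofReal_le_one.2 ?_)
          rw [abs_of_pos (pow_pos hIoc.1 d)]
          exact pow_le_one₀ hIoc.1.le hIoc.2
        · simp [Set.indicator_of_notMem hIoc]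
    _ = (C • coneMeasure x₀ (ν.restrict F)) A := by
        rw [Measure.smul_apply, ← lintegral_indicator_one hA, lintegral_coneMeasure _ _ hA1,
          lintegral_lintegral_swap, ENNReal.smul_def, smul_eq_mul]
        exact (hA1.comp
          ((continuous_lineMap_uncurry x₀).comp continuous_swap).measurable).aemeasurable

end Hyperplane

/-! ### Polytopes as cones over their boundary -/

lemma exists_restrict_biUnion_le_smul {α ι : Type*} [MeasurableSpace α] {μ ν : Measure α}
    {s : Set ι} (hs : s.Finite) {A : ι → Set α}
    (h : ∀ i ∈ s, ∃ C : ℝ≥0, μ.restrict (A i) ≤ C • ν) :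
    ∃ C : ℝ≥0, μ.restrict (⋃ i ∈ s, A i) ≤ C • ν := by
  induction s, hs using Set.Finite.induction_on with
  | empty => exact ⟨0, by simp⟩
  | @insert i s _ _ ih =>
    obtain ⟨C, hC⟩ := h i (Set.mem_insert i s)
    obtain ⟨D, hD⟩ := ih fun j hj => h j (Set.mem_insert_of_mem i hj)
    refine ⟨C + D, ?_⟩
    rw [Set.biUnion_insert, add_smul]
    exact (Measure.restrict_union_le _ _).trans (add_le_add hC hD)

lemma eq_inv_smul_ofReal_smul {α : Type*} [MeasurableSpace α] {c : ℝ} (hc : 0 < c) (ν : Measure α) :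
    ν = (c.toNNReal)⁻¹ • (ENNReal.ofReal c • ν) := by
  have hc' : c.toNNReal ≠ 0 := by simpa using hc
  rw [ENNReal.ofReal, ← ENNReal.smul_def, smul_smul, inv_mul_cancel₀ hc', one_smul]

namespace IsFacetOf

variable {n : ℕ} {P F : Set (Euc n)}

lemma exists_affineMap (hF : IsFacetOf P F) (hne : F.Nonempty) (hP : (interior P).Nonempty) :
    ∃ ℓ : Euc n →ᵃ[ℝ] ℝ, (∀ y ∈ F, ℓ y = 0) ∧ (∀ x ∈ interior P, ℓ x ≠ 0) ∧
      (finrank ℝ (LinearMap.ker ℓ.linear) : ℝ) = n - 1 := by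
  obtain ⟨⟨ℓ, hℓ, hnonneg, rfl⟩, -⟩ := hF
  have hpos := fun x (hx : x ∈ interior P) => (pos_of_mem_interior_of_nonneg hℓ hnonneg hx).ne'
  refine ⟨ℓ, fun y hy => hy.2, hpos, ?_⟩
  have hlin : ℓ.linear ≠ 0 := fun h => by
    obtain ⟨c, rfl⟩ := (AffineMap.linear_eq_zero_iff_exists_const ℓ).1 h
    obtain ⟨x, hx⟩ := hP
    obtain ⟨y, -, hy⟩ := hne
    exact hpos x hx hy
  rw [eq_sub_iff_add_eq]
  exact_mod_cast (Module.Dual.finrank_ker_add_one_of_ne_zero hlin).trans finrank_euclideanSpace_fin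

lemma isCompact (hF : IsFacetOf P F) (hP : IsCompact P) : IsCompact F :=
  hP.of_isClosed_subset (hF.1.isClosed hP.isClosed) hF.1.subset

lemma hausdorffMeasure_lt_top (hF : IsFacetOf P F) (hc : IsCompact P) (hP : (interior P).Nonempty) :
    Measure.hausdorffMeasure ((n : ℝ) - 1) F < ⊤ := by
  rcases F.eq_empty_or_nonempty with rfl | hne
  · simp
  · obtain ⟨ℓ, hℓF, -, hd⟩ := hF.exists_affineMap hne hP
    exact hd ▸ hausdorffMeasure_lt_top_of_isBounded (hF.isCompact hc).isBounded hℓF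

lemma exists_volume_restrict_convexJoin_le (hF : IsFacetOf P F) (hc : IsCompact P) {x₀ : Euc n}
    (hx₀ : x₀ ∈ interior P) :
    ∃ C : ℝ≥0, volume.restrict (convexJoin ℝ {x₀} F) ≤
      C • coneMeasure x₀ ((Measure.hausdorffMeasure ((n : ℝ) - 1)).restrict F) := by
  rcases F.eq_empty_or_nonempty with rfl | hne
  · exact ⟨0, by simp⟩
  · obtain ⟨ℓ, hℓF, hint, hd⟩ := hF.exists_affineMap hne ⟨x₀, hx₀⟩
    exact hd ▸ exists_restrict_convexJoin_le_coneMeasure volume (hF.isCompact hc) (hint x₀ hx₀) hℓF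

end IsFacetOf

namespace IsPolytope

variable {n : ℕ} {P : Set (Euc n)} {σ : Measure (Euc n)}

lemma measure_frontier_ne_top (hP : IsPolytope P)
    (hσ : ∀ F, IsFacetOf P F → ∃ c : ℝ, 0 < c ∧ σ.restrict F =
      ENNReal.ofReal c • (Measure.hausdorffMeasure ((n : ℝ) - 1)).restrict F) :
    σ (frontier P) ≠ ⊤ := by
  obtain ⟨𝓕, hfin, hfacet, hcover⟩ := hP.exists_finite_facets
  rw [Set.sUnion_eq_biUnion] at hcover
  refine ((measure_mono hcover).trans_lt (measure_biUnion_lt_top hfin fun F hF => ?_)).ne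
  obtain ⟨c, -, hc⟩ := hσ F (hfacet F hF)
  rw [← Measure.restrict_apply_self, hc, Measure.smul_apply, Measure.restrict_apply_self]
  exact ENNReal.mul_lt_top ENNReal.ofReal_lt_top
    ((hfacet F hF).hausdorffMeasure_lt_top hP.1 hP.2.1)

lemma exists_volume_restrict_le_coneMeasure (hP : IsPolytope P)
    (hσ : ∀ F, IsFacetOf P F → ∃ c : ℝ, 0 < c ∧ σ.restrict F =
      ENNReal.ofReal c • (Measure.hausdorffMeasure ((n : ℝ) - 1)).restrict F)
    {x₀ : Euc n} (hx₀ : x₀ ∈ interior P) :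
    ∃ C : ℝ≥0, volume.restrict P ≤
      C • (Measure.dirac x₀ + coneMeasure x₀ (σ.restrict (frontier P))) := by
  obtain ⟨𝓕, hfin, hfacet, hcover⟩ := hP.exists_finite_facets
  obtain ⟨C, hC⟩ : ∃ C : ℝ≥0, volume.restrict (⋃ F ∈ 𝓕, convexJoin ℝ {x₀} F) ≤
      C • coneMeasure x₀ (σ.restrict (frontier P)) := by
    refine exists_restrict_biUnion_le_smul hfin fun F hF => ?_
    obtain ⟨C, hC⟩ := (hfacet F hF).exists_volume_restrict_convexJoin_le hP.1 hx₀
    obtain ⟨c, hc, hσF⟩ := hσ F (hfacet F hF)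
    refine ⟨C * (c.toNNReal)⁻¹, hC.trans ?_⟩
    rw [eq_inv_smul_ofReal_smul hc (Measure.restrict _ F), ← hσF, coneMeasure_smul, smul_smul]
    gcongr
    exact coneMeasure_mono x₀ (Measure.restrict_mono (hfacet F hF).1.subset_frontier le_rfl)
  have hsub : P ⊆ {x₀} ∪ ⋃ F ∈ 𝓕, convexJoin ℝ {x₀} F := fun x hx => by
    refine or_iff_not_imp_left.2 fun hne => ?_
    obtain ⟨y, hy, hxy⟩ := exists_mem_frontier_mem_segment hP.1.isBounded hx hne
    obtain ⟨F, hF, hyF⟩ := hcover hy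
    exact Set.mem_biUnion hF (mem_convexJoin.2 ⟨x₀, rfl, y, hyF, hxy⟩)
  have hsingle : volume.restrict {x₀} = (volume {x₀}).toNNReal • Measure.dirac x₀ := by
    rw [Measure.restrict_singleton, ENNReal.smul_def,
      ENNReal.coe_toNNReal isCompact_singleton.measure_lt_top.ne]
  refine ⟨max (volume {x₀}).toNNReal C, (Measure.restrict_mono hsub le_rfl).trans <|
    (Measure.restrict_union_le _ _).trans ?_⟩
  rw [smul_add, hsingle]
  exact add_le_add (by gcongr; exact le_max_left _ _)
    (hC.trans (by gcongr; exact le_max_right _ _))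

end IsPolytope

/-! ### Log-convex functions -/

lemma measurable_indicator_of_lowerSemicontinuousOn {α : Type*} [TopologicalSpace α]
    [MeasurableSpace α] [BorelSpace α] {s : Set α} {u : α → ℝ≥0∞}
    (hu : LowerSemicontinuousOn u s) (hs : MeasurableSet s) : Measurable (s.indicator u) := by
  classical
  rw [← Set.piecewise_eq_indicator]
  refine measurable_of_restrict_of_restrict_compl hs ?_ ?_
  · rw [Set.domRestrict_piecewise]
    exact (lowerSemicontinuous_restrict_iff.2 hu).measurable
  · rw [Set.domRestrict_piecewise_compl]
    exact measurable_const

lemma aemeasurable_of_lowerSemicontinuousOn {α : Type*} [TopologicalSpace α]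
    [MeasurableSpace α] [BorelSpace α] {s : Set α} {u : α → ℝ≥0∞} {ν : Measure α}
    (hu : LowerSemicontinuousOn u s) (hs : MeasurableSet s) (hν : ∀ᵐ x ∂ν, x ∈ s) :
    AEMeasurable u ν :=
  ⟨s.indicator u, measurable_indicator_of_lowerSemicontinuousOn hu hs,
    hν.mono fun _ hx => (Set.indicator_of_mem hx u).symm⟩

lemma rpow_mul_rpow_add_le (a b c d : ℝ≥0∞) {t : ℝ} (h0 : 0 ≤ t) (h1 : t ≤ 1) :
    a ^ (1 - t) * b ^ t + c ^ (1 - t) * d ^ t ≤ (a + c) ^ (1 - t) * (b + d) ^ t := by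
  rcases h0.eq_or_lt with rfl | h0
  · simp
  rcases h1.eq_or_lt with rfl | h1
  · simp
  have h1' : 0 < 1 - t := sub_pos.2 h1
  have hpq : (1 / (1 - t)).HolderConjugate (1 / t) := by
    rw [Real.holderConjugate_iff]
    refine ⟨by rw [lt_div_iff₀ h1']; linarith, by field_simp; ring⟩
  have := ENNReal.inner_le_Lp_mul_Lq Finset.univ ![a ^ (1 - t), c ^ (1 - t)] ![b ^ t, d ^ t] hpq
  simpa [Fin.sum_univ_two, ← ENNReal.rpow_mul, h1'.ne', h0.ne'] using this

namespace LogConvexOn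

variable {n : ℕ} {K : Set (Euc n)} {u v w : Euc n → ℝ≥0∞} {x y : Euc n} {r s : ℝ}

lemma mono {K' : Set (Euc n)} (hu : LogConvexOn K u) (h : K' ⊆ K) : LogConvexOn K' u :=
  fun _ hx _ hy => hu (h hx) (h hy)

lemma apply_lineMap_le (hu : LogConvexOn K u) (hx : x ∈ K) (hy : y ∈ K)
    (hs : s ∈ Set.Icc (0 : ℝ) 1) :
    u (AffineMap.lineMap x y s) ≤ u x ^ (1 - s) * u y ^ s := by
  rw [AffineMap.lineMap_apply_module]
  exact hu hx hy hs.1 hs.2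

lemma const_smul (hu : LogConvexOn K u) (a : ℝ≥0) : LogConvexOn K (a • u) := by
  intro x hx y hy t h0 h1
  have h1' : 0 ≤ 1 - t := sub_nonneg.2 h1
  simp only [Pi.smul_apply, ENNReal.smul_def, smul_eq_mul]
  calc (a : ℝ≥0∞) * u ((1 - t) • x + t • y) ≤ a * (u x ^ (1 - t) * u y ^ t) := by
        gcongr
        exact hu hx hy h0 h1
    _ = (a * u x) ^ (1 - t) * (a * u y) ^ t := by
        rw [ENNReal.mul_rpow_of_nonneg _ _ h1', ENNReal.mul_rpow_of_nonneg _ _ h0,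
          mul_mul_mul_comm, ← ENNReal.rpow_add_of_nonneg _ _ h1' h0, sub_add_cancel,
          ENNReal.rpow_one]

lemma add (hu : LogConvexOn K u) (hv : LogConvexOn K v) : LogConvexOn K (u + v) :=
  fun _ hx _ hy _ h0 h1 => (add_le_add (hu hx hy h0 h1) (hv hx hy h0 h1)).trans
    (rpow_mul_rpow_add_le _ _ _ _ h0 h1)

lemma convexOn_toReal (hw : LogConvexOn K w) (hK : Convex ℝ K) (hfin : ∀ x ∈ K, w x ≠ ⊤) :
    ConvexOn ℝ K fun x => (w x).toReal := by
  refine ⟨hK, fun x hx y hy a b ha hb hab => ?_⟩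
  obtain rfl : a = 1 - b := by linarith
  calc (w ((1 - b) • x + b • y)).toReal ≤ (w x ^ (1 - b) * w y ^ b).toReal :=
        ENNReal.toReal_mono (ENNReal.mul_ne_top (ENNReal.rpow_ne_top_of_nonneg ha (hfin x hx))
          (ENNReal.rpow_ne_top_of_nonneg hb (hfin y hy))) (hw hx hy hb (by linarith))
    _ = (w x).toReal ^ (1 - b) * (w y).toReal ^ b := by
        rw [ENNReal.toReal_mul, ENNReal.toReal_rpow, ENNReal.toReal_rpow]
    _ ≤ (1 - b) * (w x).toReal + b * (w y).toReal :=
        Real.geom_mean_le_arith_mean2_weighted ha hb ENNReal.toReal_nonneg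
          ENNReal.toReal_nonneg hab

lemma continuousOn (hw : LogConvexOn K w) (hK : Convex ℝ K) (hKo : IsOpen K)
    (hfin : ∀ x ∈ K, w x ≠ ⊤) : ContinuousOn w K :=
  (ENNReal.continuous_ofReal.comp_continuousOn
    ((hw.convexOn_toReal hK hfin).continuousOn hKo)).congr
    fun x hx => (ENNReal.ofReal_toReal (hfin x hx)).symm

lemma apply_midpoint_le_add (hu : LogConvexOn K u) (hx : x ∈ K) (hy : y ∈ K) :
    u (midpoint ℝ x y) ≤ u x + u y :=
  calc u (midpoint ℝ x y) ≤ u x ^ (1 - ⅟2 : ℝ) * u y ^ (⅟2 : ℝ) :=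
        hu.apply_lineMap_le hx hy ⟨by norm_num, by norm_num⟩
    _ ≤ (u x + u y) ^ (1 - ⅟2 : ℝ) * (u x + u y) ^ (⅟2 : ℝ) :=
        mul_le_mul' (ENNReal.rpow_le_rpow le_self_add (by norm_num))
          (ENNReal.rpow_le_rpow le_add_self (by norm_num))
    _ = u x + u y := by
        rw [← ENNReal.rpow_add_of_nonneg _ _ (by norm_num) (by norm_num), sub_add_cancel,
          ENNReal.rpow_one]

lemma volume_ball_mul_le (hu : LogConvexOn (Metric.ball x r) u)
    (hm : AEMeasurable u (volume.restrict (Metric.ball x r))) :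
    volume (Metric.ball x r) * u x ≤ 2 * ∫⁻ y in Metric.ball x r, u y := by
  have hball : (fun y => x + x - y) ⁻¹' Metric.ball x r = Metric.ball x r := by
    ext y
    simp only [Set.mem_preimage, Metric.mem_ball, dist_eq_norm]
    rw [add_sub_right_comm, add_sub_cancel_right, norm_sub_rev]
  have hreflect : ∫⁻ y in Metric.ball x r, u (x + x - y) = ∫⁻ y in Metric.ball x r, u y := by
    have := (Measure.measurePreserving_sub_left volume (x + x)).setLIntegral_comp_preimage_emb
      (MeasurableEquiv.subLeft (x + x)).measurableEmbedding u (Metric.ball x r)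
    rwa [hball] at this
  calc volume (Metric.ball x r) * u x = ∫⁻ _ in Metric.ball x r, u x := by
        rw [setLIntegral_const, mul_comm]
    _ ≤ ∫⁻ y in Metric.ball x r, (u y + u (x + x - y)) := by
        refine setLIntegral_mono' measurableSet_ball fun y hy => ?_
        have hmid : midpoint ℝ y (x + x - y) = x := by
          rw [midpoint_eq_smul_add, add_sub_cancel, ← two_smul ℝ x, smul_smul, invOf_mul_self,
            one_smul]
        have := hu.apply_midpoint_le_add hy (hball.ge hy)
        rwa [hmid] at this
    _ = 2 * ∫⁻ y in Metric.ball x r, u y := by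
        rw [lintegral_add_left' hm, hreflect, two_mul]

variable {ι : Type*}

lemma fun_limsup {u : ι → Euc n → ℝ≥0∞} {G : Filter ι} (hu : ∀ k, LogConvexOn K (u k))
    (hfin : ∀ x ∈ K, limsup (fun k => u k x) G ≠ ⊤) :
    LogConvexOn K fun x => limsup (fun k => u k x) G := by
  rcases eq_or_neBot G with rfl | hG
  · intro _ _ _ _ _ _ _
    simp
  have hrpow : ∀ z, ∀ a : ℝ, 0 ≤ a →
      limsup (fun k => u k z ^ a) G = (limsup (fun k => u k z) G) ^ a := fun z a ha =>
    ((ENNReal.monotone_rpow_of_nonneg ha).map_limsup_of_continuousAt _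
      ENNReal.continuous_rpow_const.continuousAt).symm
  intro x hx y hy t h0 h1
  have h1' : 0 ≤ 1 - t := sub_nonneg.2 h1
  calc limsup (fun k => u k ((1 - t) • x + t • y)) G
      ≤ limsup (fun k => u k x ^ (1 - t) * u k y ^ t) G :=
        limsup_le_limsup (Eventually.of_forall fun k => hu k hx hy h0 h1)
    _ ≤ limsup (fun k => u k x ^ (1 - t)) G * limsup (fun k => u k y ^ t) G := by
        refine ENNReal.limsup_mul_le' (Or.inr ?_) (Or.inl ?_)
        · rw [hrpow y t h0]
          exact ENNReal.rpow_ne_top_of_nonneg h0 (hfin y hy)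
        · rw [hrpow x _ h1']
          exact ENNReal.rpow_ne_top_of_nonneg h1' (hfin x hx)
    _ = _ := by rw [hrpow x _ h1', hrpow y t h0]

/- If a subsequence stayed below its limsup `w x`, its own limsup would be a continuous function
agreeing with `w` on the dense sequence but not at `x`. -/
lemma exists_subseq_tendsto {u : ℕ → Euc n → ℝ≥0∞} (hu : ∀ k, LogConvexOn K (u k))
    (hK : Convex ℝ K) (hKo : IsOpen K) (hfin : ∀ x ∈ K, ⨆ k, u k x ≠ ⊤) :
    ∃ φ : ℕ → ℕ, StrictMono φ ∧ ∃ w : Euc n → ℝ≥0∞, LogConvexOn K w ∧ (∀ x ∈ K, w x ≠ ⊤) ∧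
      ∀ x ∈ K, Tendsto (fun k => u (φ k) x) atTop (𝓝 (w x)) := by
  let d := TopologicalSpace.denseSeq (Euc n)
  obtain ⟨a, φ, hφ, hlim⟩ := CompactSpace.tendsto_subseq fun k => fun i : ℕ => u k (d i)
  rw [tendsto_pi_nhds] at hlim
  have hlimsup (G : Filter ℕ) : ∀ x ∈ K, limsup (fun k => u (φ k) x) G ≠ ⊤ := fun x hx =>
    ((limsup_le_iSup.trans (iSup_le fun k => le_iSup (u · x) (φ k))).trans_lt
      (hfin x hx).lt_top).ne
  have hlog (G : Filter ℕ) : LogConvexOn K fun x => limsup (fun k => u (φ k) x) G :=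
    fun_limsup (fun k => hu (φ k)) (hlimsup G)
  have hcont (G : Filter ℕ) : ContinuousOn (fun x => limsup (fun k => u (φ k) x) G) K :=
    (hlog G).continuousOn hK hKo (hlimsup G)
  refine ⟨φ, hφ, _, hlog atTop, hlimsup atTop, fun x hx =>
    tendsto_of_le_liminf_of_limsup_le (not_lt.1 fun hlt => ?_) le_rfl⟩
  obtain ⟨c, hc₁, hc₂⟩ := exists_between hlt
  let G : Filter ℕ := atTop ⊓ 𝓟 {k | u (φ k) x < c}
  have : G.NeBot := frequently_mem_iff_neBot.1 (frequently_lt_of_liminf_lt (h := hc₁))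
  have heq : Set.EqOn (fun x => limsup (fun k => u (φ k) x) atTop)
      (fun x => limsup (fun k => u (φ k) x) G) (K ∩ Set.range d) := by
    rintro _ ⟨-, i, rfl⟩
    exact (hlim i).limsup_eq.trans ((hlim i).mono_left inf_le_left).limsup_eq.symm
  have hx_eq := heq.of_subset_closure (hcont atTop) (hcont G) Set.inter_subset_left
    ((TopologicalSpace.denseRange_denseSeq (Euc n)).open_subset_closure_inter hKo) hx
  have hle : limsup (fun k => u (φ k) x) G ≤ c :=
    limsup_le_of_le (h := mem_inf_of_right fun _ (hk : u (φ _) x < c) => hk.le)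
  exact hc₂.not_ge (hx_eq.le.trans hle)

end LogConvexOn

/-! ### The radial envelope -/

lemma lineMap_mem_interior {E : Type*} [AddCommGroup E] [Module ℝ E] [TopologicalSpace E]
    [IsTopologicalAddGroup E] [ContinuousConstSMul ℝ E] {P : Set E} (hP : Convex ℝ P) {x y : E}
    (hx : x ∈ interior P) (hy : y ∈ P) {s : ℝ} (hs : s ∈ Set.Ioo (0 : ℝ) 1) :
    AffineMap.lineMap x y s ∈ interior P :=
  hP.openSegment_interior_self_subset_interior hx hy (lineMap_mem_openSegment ℝ x y hs)

lemma tendsto_rpow_one_sub_inv_mul_rpow_inv {a b : ℝ≥0∞} (ha₀ : a ≠ 0) (ha : a ≠ ⊤)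
    (hb₀ : b ≠ 0) (hb : b ≠ ⊤) :
    Tendsto (fun s : ℝ => a ^ (1 - s⁻¹) * b ^ s⁻¹) (𝓝 1) (𝓝 b) := by
  lift a to ℝ≥0 using ha
  lift b to ℝ≥0 using hb
  have ha₀' : a ≠ 0 := by exact_mod_cast ha₀
  have hb₀' : b ≠ 0 := by exact_mod_cast hb₀
  have hinv : Tendsto (fun s : ℝ => s⁻¹) (𝓝 1) (𝓝 1) := by
    simpa using tendsto_inv₀ (one_ne_zero (α := ℝ))
  have hlim : Tendsto (fun s : ℝ => a ^ (1 - s⁻¹) * b ^ s⁻¹) (𝓝 1)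
      (𝓝 (a ^ (1 - 1 : ℝ) * b ^ (1 : ℝ))) :=
    (tendsto_const_nhds.nnrpow (hinv.const_sub 1) (Or.inl ha₀')).mul
      (tendsto_const_nhds.nnrpow hinv (Or.inl hb₀'))
  rw [sub_self, NNReal.rpow_zero, one_mul, NNReal.rpow_one] at hlim
  refine (ENNReal.tendsto_coe.2 hlim).congr fun s => ?_
  rw [ENNReal.coe_mul, ENNReal.coe_rpow_of_ne_zero ha₀', ENNReal.coe_rpow_of_ne_zero hb₀']

variable {n : ℕ}

/-- The value at `y` of the log-affine function on the ray from `x₀` through `y` that agrees with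
`v` at `x₀` and at the point `lineMap x₀ y s`. -/
def radialExtrapolation (v : Euc n → ℝ≥0∞) (x₀ : Euc n) (s : ℝ) (y : Euc n) : ℝ≥0∞ :=
  v x₀ ^ (1 - s⁻¹) * v (AffineMap.lineMap x₀ y s) ^ s⁻¹

/-- The supremum of the extrapolations of `v` to `y` along the ray from `x₀`. It depends only on
the values of `v` in the open segment (and at `x₀`), and extends a log-convex function from the
interior of a convex set to its boundary in a lower semicontinuous way. -/
def radialEnvelope (v : Euc n → ℝ≥0∞) (x₀ y : Euc n) : ℝ≥0∞ :=
  ⨆ s : Set.Ioo (0 : ℝ) 1, radialExtrapolation v x₀ s y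

variable {K P : Set (Euc n)} {v w : Euc n → ℝ≥0∞} {x₀ y z : Euc n} {s : ℝ}

lemma radialExtrapolation_le_radialEnvelope (v : Euc n → ℝ≥0∞) (x₀ y : Euc n)
    (hs : s ∈ Set.Ioo (0 : ℝ) 1) : radialExtrapolation v x₀ s y ≤ radialEnvelope v x₀ y :=
  le_iSup (fun s : Set.Ioo (0 : ℝ) 1 => radialExtrapolation v x₀ s y) ⟨s, hs⟩

lemma LogConvexOn.radialExtrapolation_le (hv : LogConvexOn K v) (hx₀ : x₀ ∈ K) (hy : y ∈ K)
    (h₀ : v x₀ ≠ 0) (htop : v x₀ ≠ ⊤) (hs : s ∈ Set.Ioo (0 : ℝ) 1) :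
    radialExtrapolation v x₀ s y ≤ v y := by
  have hs₀ : 0 ≤ s⁻¹ := inv_nonneg.2 hs.1.le
  calc radialExtrapolation v x₀ s y
      ≤ v x₀ ^ (1 - s⁻¹) * (v x₀ ^ (1 - s) * v y ^ s) ^ s⁻¹ :=
        mul_le_mul_right (ENNReal.rpow_le_rpow
          (hv.apply_lineMap_le hx₀ hy (Set.Ioo_subset_Icc_self hs)) hs₀) _
    _ = v x₀ ^ (1 - s⁻¹ + (1 - s) * s⁻¹) * v y ^ (s * s⁻¹) := by
        rw [ENNReal.mul_rpow_of_nonneg _ _ hs₀, ← ENNReal.rpow_mul, ← ENNReal.rpow_mul,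
          ← mul_assoc, ← ENNReal.rpow_add _ _ h₀ htop]
    _ = v y := by
        rw [sub_mul, mul_inv_cancel₀ hs.1.ne', one_mul, sub_add_sub_cancel, sub_self,
          ENNReal.rpow_zero, one_mul, ENNReal.rpow_one]

lemma le_radialEnvelope (hv : LowerSemicontinuousWithinAt v K y)
    (hK : ∀ s ∈ Set.Ioo (0 : ℝ) 1, AffineMap.lineMap x₀ y s ∈ K) (h₀ : v x₀ ≠ 0)
    (htop : v x₀ ≠ ⊤) : v y ≤ radialEnvelope v x₀ y := by
  refine le_of_forall_lt_imp_le_of_dense fun a ha => ?_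
  obtain ⟨b, hab, hb⟩ := exists_between ha
  refine hab.le.trans (le_of_tendsto ((tendsto_rpow_one_sub_inv_mul_rpow_inv h₀ htop
    hab.ne_bot (hb.trans_le le_top).ne).mono_left (nhdsWithin_le_nhds (s := Set.Iio 1))) ?_)
  have hIoo : ∀ᶠ s in 𝓝[<] (1 : ℝ), s ∈ Set.Ioo (0 : ℝ) 1 := Ioo_mem_nhdsLT one_pos
  have hlim : Tendsto (AffineMap.lineMap x₀ y) (𝓝[<] (1 : ℝ)) (𝓝[K] y) := by
    refine tendsto_nhdsWithin_iff.2 ⟨?_, hIoo.mono hK⟩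
    have := (AffineMap.lineMap_continuous (p := x₀) (q := y)).tendsto (1 : ℝ)
    rw [AffineMap.lineMap_apply_one] at this
    exact this.mono_left nhdsWithin_le_nhds
  filter_upwards [hIoo, hlim.eventually (hv b hb)] with s hs hlt
  exact (mul_le_mul_right (ENNReal.rpow_le_rpow hlt.le (inv_nonneg.2 hs.1.le)) _).trans
    (radialExtrapolation_le_radialEnvelope v x₀ y hs)

lemma LogConvexOn.radialEnvelope_eq_of_lowerSemicontinuousOn (hv : LogConvexOn P v)
    (hP : Convex ℝ P) (hlsc : LowerSemicontinuousOn v P) (hx₀ : x₀ ∈ interior P) (h₀ : v x₀ ≠ 0)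
    (htop : v x₀ ≠ ⊤) (hy : y ∈ P) : radialEnvelope v x₀ y = v y :=
  le_antisymm
    (iSup_le fun s => hv.radialExtrapolation_le (interior_subset hx₀) hy h₀ htop s.2)
    (le_radialEnvelope (hlsc y hy)
      (fun _ hs => interior_subset (lineMap_mem_interior hP hx₀ hy hs)) h₀ htop)

lemma LogConvexOn.radialEnvelope_eq_of_mem_interior (hw : LogConvexOn (interior P) w)
    (hP : Convex ℝ P) (hfin : ∀ x ∈ interior P, w x ≠ ⊤) (hx₀ : x₀ ∈ interior P)
    (h₀ : w x₀ ≠ 0) (hy : y ∈ interior P) : radialEnvelope w x₀ y = w y :=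
  have hcont := hw.continuousOn hP.interior isOpen_interior hfin
  le_antisymm (iSup_le fun s => hw.radialExtrapolation_le hx₀ hy h₀ (hfin x₀ hx₀) s.2)
    (le_radialEnvelope (hcont.lowerSemicontinuousOn y hy)
      (fun _ hs => lineMap_mem_interior hP hx₀ (interior_subset hy) hs) h₀ (hfin x₀ hx₀))

lemma LogConvexOn.lowerSemicontinuousOn_radialEnvelope (hw : LogConvexOn (interior P) w)
    (hP : Convex ℝ P) (hfin : ∀ x ∈ interior P, w x ≠ ⊤) (hx₀ : x₀ ∈ interior P) (h₀ : w x₀ ≠ 0) :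
    LowerSemicontinuousOn (radialEnvelope w x₀) P := by
  refine lowerSemicontinuousOn_iSup fun s => ContinuousOn.lowerSemicontinuousOn ?_
  have hray : ContinuousOn (fun y => w (AffineMap.lineMap x₀ y (s : ℝ))) P :=
    (hw.continuousOn hP.interior isOpen_interior hfin).comp
      (by simp only [AffineMap.lineMap_apply]; fun_prop)
      fun y hy => lineMap_mem_interior hP hx₀ hy s.2
  exact (ENNReal.continuous_const_mul
    (ENNReal.rpow_ne_top_of_ne_zero h₀ (hfin x₀ hx₀))).comp_continuousOn
    (ENNReal.continuous_rpow_const.comp_continuousOn hray)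

lemma LogConvexOn.logConvexOn_radialEnvelope (hw : LogConvexOn (interior P) w)
    (hP : Convex ℝ P) (hfin : ∀ x ∈ interior P, w x ≠ ⊤) (hx₀ : x₀ ∈ interior P) (h₀ : w x₀ ≠ 0) :
    LogConvexOn P (radialEnvelope w x₀) := by
  intro y hy z hz t t₀ t₁
  refine iSup_le fun ⟨s, hs⟩ => ?_
  have hs₀ : 0 ≤ s⁻¹ := inv_nonneg.2 hs.1.le
  have t₁' : 0 ≤ 1 - t := sub_nonneg.2 t₁
  have hline : AffineMap.lineMap x₀ ((1 - t) • y + t • z) s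
      = (1 - t) • AffineMap.lineMap x₀ y s + t • AffineMap.lineMap x₀ z s := by
    simp only [AffineMap.lineMap_apply_module]
    module
  set c := w x₀ ^ (1 - s⁻¹)
  have hc₀ : c ≠ 0 := (ENNReal.rpow_pos (pos_iff_ne_zero.2 h₀) (hfin x₀ hx₀)).ne'
  have hc : c ≠ ⊤ := ENNReal.rpow_ne_top_of_ne_zero h₀ (hfin x₀ hx₀)
  calc radialExtrapolation w x₀ s ((1 - t) • y + t • z)
      ≤ c * (w (AffineMap.lineMap x₀ y s) ^ (1 - t) * w (AffineMap.lineMap x₀ z s) ^ t) ^ s⁻¹ := by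
        refine mul_le_mul_right (ENNReal.rpow_le_rpow ?_ hs₀) _
        rw [hline]
        exact hw (lineMap_mem_interior hP hx₀ hy hs) (lineMap_mem_interior hP hx₀ hz hs) t₀ t₁
    _ = radialExtrapolation w x₀ s y ^ (1 - t) * radialExtrapolation w x₀ s z ^ t := by
        rw [radialExtrapolation, radialExtrapolation, ENNReal.mul_rpow_of_nonneg _ _ hs₀,
          ENNReal.mul_rpow_of_nonneg _ _ t₁', ENNReal.mul_rpow_of_nonneg _ _ t₀,
          mul_mul_mul_comm, ← ENNReal.rpow_add _ _ hc₀ hc, sub_add_cancel, ENNReal.rpow_one]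
        simp only [← ENNReal.rpow_mul, mul_comm s⁻¹]
    _ ≤ radialEnvelope w x₀ y ^ (1 - t) * radialEnvelope w x₀ z ^ t := by
        gcongr <;> exact radialExtrapolation_le_radialEnvelope _ _ _ hs

lemma radialEnvelope_pos (hP : Convex ℝ P) (hfin : ∀ x ∈ interior P, w x ≠ ⊤)
    (hpos : ∀ x ∈ interior P, w x ≠ 0) (hx₀ : x₀ ∈ interior P) (hy : y ∈ P) :
    0 < radialEnvelope w x₀ y := by
  have hs : (1 / 2 : ℝ) ∈ Set.Ioo (0 : ℝ) 1 := ⟨by norm_num, by norm_num⟩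
  refine lt_of_lt_of_le ?_ (radialExtrapolation_le_radialEnvelope w x₀ y hs)
  have hm := lineMap_mem_interior hP hx₀ hy hs
  exact ENNReal.mul_pos (ENNReal.rpow_pos (pos_iff_ne_zero.2 (hpos _ hx₀)) (hfin _ hx₀)).ne'
    (ENNReal.rpow_pos (pos_iff_ne_zero.2 (hpos _ hm)) (hfin _ hm)).ne'

lemma radialEnvelope_le_liminf {ι : Type*} {l : Filter ι} [l.NeBot]
    {u : ι → Euc n → ℝ≥0∞} (hP : Convex ℝ P) (hu : ∀ k, LogConvexOn P (u k))
    (hpos : ∀ k, u k x₀ ≠ 0) (hfin : ∀ k, u k x₀ ≠ ⊤)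
    (hlim : ∀ x ∈ interior P, Tendsto (fun k => u k x) l (𝓝 (w x)))
    (hw : ∀ x ∈ interior P, w x ≠ ⊤) (h₀ : w x₀ ≠ 0) (hx₀ : x₀ ∈ interior P) (hy : y ∈ P) :
    radialEnvelope w x₀ y ≤ liminf (fun k => u k y) l := by
  refine iSup_le fun ⟨s, hs⟩ => ?_
  have hm := lineMap_mem_interior hP hx₀ hy hs
  have hext : Tendsto (fun k => radialExtrapolation (u k) x₀ s y) l
      (𝓝 (radialExtrapolation w x₀ s y)) :=
    ENNReal.Tendsto.mul ((ENNReal.continuous_rpow_const.tendsto _).comp (hlim _ hx₀))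
      (Or.inr (ENNReal.rpow_ne_top_of_nonneg (inv_nonneg.2 hs.1.le) (hw _ hm)))
      ((ENNReal.continuous_rpow_const.tendsto _).comp (hlim _ hm))
      (Or.inr (ENNReal.rpow_ne_top_of_ne_zero h₀ (hw _ hx₀)))
  rw [← hext.liminf_eq]
  exact liminf_le_liminf (Eventually.of_forall fun k =>
    (hu k).radialExtrapolation_le (interior_subset hx₀) hy (hpos k) (hfin k) hs)

lemma LogConvexOn.eq_zero_of_eq_zero {O : Set (Euc n)} (hw : LogConvexOn O w) (hO : IsOpen O)
    (hy : y ∈ O) (hy₀ : w y = 0) (hz : z ∈ O) : w z = 0 := by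
  have hcont : Continuous fun e : ℝ => AffineMap.lineMap y z (1 + e) :=
    AffineMap.lineMap_continuous.comp (continuous_const_add 1)
  have hnear : ∀ᶠ e : ℝ in 𝓝[>] 0, AffineMap.lineMap y z (1 + e) ∈ O :=
    (hcont.continuousAt.eventually_mem (by simpa using hO.mem_nhds hz)).filter_mono
      nhdsWithin_le_nhds
  obtain ⟨e, he, he₀⟩ := (hnear.and self_mem_nhdsWithin).exists
  have he₁ : (0 : ℝ) < 1 + e := add_pos one_pos he₀
  have hlt : (1 + e)⁻¹ < 1 := inv_lt_one_of_one_lt₀ (lt_add_of_pos_right 1 he₀)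
  have hle := hw.apply_lineMap_le hy he ⟨(inv_pos.2 he₁).le, hlt.le⟩
  rw [AffineMap.lineMap_lineMap_right, inv_mul_cancel₀ he₁.ne', AffineMap.lineMap_apply_one, hy₀,
    ENNReal.zero_rpow_of_pos (sub_pos.2 hlt), zero_mul] at hle
  exact le_zero_iff.1 hle

/-! ### The entropy integrand -/

/-- The function `y log y + 1 - y` on `[0, ∞]`. For a density `u` its integral differs from that of
`u log u` only by `∫ (1 - u) = 0`, and it is nonnegative. The value at `∞` is the junk value `1`. -/
def entropyIntegrand (y : ℝ≥0∞) : ℝ≥0∞ := ENNReal.ofReal (klFun y.toReal)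

lemma measurable_entropyIntegrand : Measurable entropyIntegrand :=
  (measurable_klFun.comp ENNReal.measurable_toReal).ennreal_ofReal

lemma continuousAt_entropyIntegrand {y : ℝ≥0∞} (hy : y ≠ ⊤) :
    ContinuousAt entropyIntegrand y :=
  (ENNReal.continuous_ofReal.comp continuous_klFun).continuousAt.comp
    (ENNReal.continuousAt_toReal hy)

lemma entropyIntegrand_one : entropyIntegrand 1 = 0 := by
  simp [entropyIntegrand, klFun_one]

lemma strictConvexOn_entropyIntegrand :
    StrictConvexOn ℝ≥0 {y : ℝ≥0∞ | y ≠ ⊤} entropyIntegrand := by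
  have hsmul (a : ℝ≥0) (y : ℝ≥0∞) : (a • y).toReal = a * y.toReal := ENNReal.toReal_smul a y
  have hne (a : ℝ≥0) {y : ℝ≥0∞} (hy : y ≠ ⊤) : a • y ≠ ⊤ :=
    ENNReal.mul_ne_top ENNReal.coe_ne_top hy
  have hadd {x y : ℝ≥0∞} (hx : x ≠ ⊤) (hy : y ≠ ⊤) (a b : ℝ≥0) :
      (a • x + b • y).toReal = a * x.toReal + b * y.toReal := by
    rw [ENNReal.toReal_add (hne a hx) (hne b hy), hsmul, hsmul]
  refine ⟨fun x hx y hy a b _ _ _ => ENNReal.add_ne_top.2 ⟨hne a hx, hne b hy⟩,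
    fun x hx y hy hxy a b ha hb hab => ?_⟩
  have hlt := strictConvexOn_klFun.2 (ENNReal.toReal_nonneg (a := x))
    (ENNReal.toReal_nonneg (a := y)) ((ENNReal.toReal_eq_toReal_iff' hx hy).not.2 hxy)
    (NNReal.coe_pos.2 ha) (NNReal.coe_pos.2 hb) (by exact_mod_cast hab)
  rw [smul_eq_mul, smul_eq_mul, smul_eq_mul, smul_eq_mul] at hlt
  have h₁ : 0 ≤ klFun x.toReal := klFun_nonneg ENNReal.toReal_nonneg
  have h₂ : 0 ≤ klFun y.toReal := klFun_nonneg ENNReal.toReal_nonneg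
  have h₃ : 0 ≤ klFun (a * x.toReal + b * y.toReal) := klFun_nonneg (by positivity)
  calc entropyIntegrand (a • x + b • y)
      = ENNReal.ofReal (klFun (a * x.toReal + b * y.toReal)) := by rw [entropyIntegrand, hadd hx hy]
    _ < ENNReal.ofReal (a * klFun x.toReal + b * klFun y.toReal) :=
        (ENNReal.ofReal_lt_ofReal_iff (h₃.trans_lt hlt)).2 hlt
    _ = a • entropyIntegrand x + b • entropyIntegrand y := by
        rw [ENNReal.ofReal_add (by positivity) (by positivity), ENNReal.ofReal_mul a.coe_nonneg,
          ENNReal.ofReal_mul b.coe_nonneg, ENNReal.ofReal_coe_nnreal, ENNReal.ofReal_coe_nnreal]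
        rfl

lemma klFun_le_mul_one_add_log {z Z : ℝ} (hz : 0 ≤ z) (hzZ : z ≤ Z) (hZ : 1 ≤ Z) :
    klFun z ≤ Z * (1 + Real.log Z) := by
  have hlogZ : 0 ≤ Real.log Z := Real.log_nonneg hZ
  have hmul : z * Real.log z ≤ Z * Real.log Z := by
    rcases le_total z 1 with h | h
    · exact (Real.mul_log_nonpos hz h).trans (by positivity)
    · gcongr
      exact Real.log_nonneg h
  rw [klFun_apply]
  linarith

/- The bound integrates `(1 + a) * d/ds (s * exp (a + s * b))`. -/
lemma lintegral_Ioc_exp_mul_le {a b : ℝ} (ha : 0 ≤ a) (hb : 0 ≤ b) :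
    ∫⁻ s in Set.Ioc (0 : ℝ) 1, ENNReal.ofReal (Real.exp (a + s * b) * (1 + (a + s * b)))
      ≤ ENNReal.ofReal ((1 + a) * Real.exp (a + b)) := by
  have hcont : Continuous fun s : ℝ => (1 + a) * (Real.exp (a + s * b) * (1 + s * b)) := by
    fun_prop
  have hint : ∫ s in (0 : ℝ)..1, (1 + a) * (Real.exp (a + s * b) * (1 + s * b))
      = (1 + a) * Real.exp (a + b) := by
    rw [intervalIntegral.integral_eq_sub_of_hasDerivAt
      (f := fun s => (1 + a) * (s * Real.exp (a + s * b))) _ (hcont.intervalIntegrable _ _)]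
    · simp
    · intro s _
      have hexp : HasDerivAt (fun s : ℝ => Real.exp (a + s * b))
          (Real.exp (a + s * b) * (1 * b)) s := (((hasDerivAt_id s).mul_const b).const_add a).exp
      refine (((hasDerivAt_id s).fun_mul hexp).const_mul (1 + a)).congr_deriv ?_
      simp only [id]
      ring
  calc ∫⁻ s in Set.Ioc (0 : ℝ) 1, ENNReal.ofReal (Real.exp (a + s * b) * (1 + (a + s * b)))
      ≤ ∫⁻ s in Set.Ioc (0 : ℝ) 1,
          ENNReal.ofReal ((1 + a) * (Real.exp (a + s * b) * (1 + s * b))) := by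
        refine setLIntegral_mono' measurableSet_Ioc fun s hs => ENNReal.ofReal_le_ofReal ?_
        have hsb : 0 ≤ a * (s * b) := mul_nonneg ha (mul_nonneg hs.1.le hb)
        rw [mul_left_comm]
        gcongr
        linarith
    _ = ENNReal.ofReal ((1 + a) * Real.exp (a + b)) := by
        rw [← hint, intervalIntegral.integral_of_le zero_le_one,
          ofReal_integral_eq_lintegral_ofReal
            (hcont.integrableOn_Icc.mono_set Set.Ioc_subset_Icc_self)]
        filter_upwards [ae_restrict_mem measurableSet_Ioc] with s hs
        have hsb : 0 ≤ s * b := mul_nonneg hs.1.le hb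
        positivity

namespace LogConvexOn

variable {n : ℕ} {K : Set (Euc n)} {u : Euc n → ℝ≥0∞} {x y : Euc n} {a : ℝ}

lemma apply_lineMap_le_ofReal_exp {b s : ℝ} (hu : LogConvexOn K u) (hx : x ∈ K) (hy : y ∈ K)
    (hux : u x ≤ ENNReal.ofReal (Real.exp a)) (huy : u y ≤ ENNReal.ofReal (Real.exp (a + b)))
    (hs : s ∈ Set.Icc (0 : ℝ) 1) :
    u (AffineMap.lineMap x y s) ≤ ENNReal.ofReal (Real.exp (a + s * b)) :=
  calc u (AffineMap.lineMap x y s) ≤ u x ^ (1 - s) * u y ^ s := hu.apply_lineMap_le hx hy hs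
    _ ≤ ENNReal.ofReal (Real.exp a) ^ (1 - s) * ENNReal.ofReal (Real.exp (a + b)) ^ s :=
        mul_le_mul' (ENNReal.rpow_le_rpow hux (sub_nonneg.2 hs.2)) (ENNReal.rpow_le_rpow huy hs.1)
    _ = ENNReal.ofReal (Real.exp (a + s * b)) := by
        rw [ENNReal.ofReal_rpow_of_pos (Real.exp_pos _),
          ENNReal.ofReal_rpow_of_pos (Real.exp_pos _), ← ENNReal.ofReal_mul (by positivity),
          ← Real.exp_mul, ← Real.exp_mul, ← Real.exp_add]
        congr 2
        ring

lemma lintegral_entropyIntegrand_lineMap_le (hu : LogConvexOn K u) (hx : x ∈ K) (hy : y ∈ K)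
    (ha : 0 ≤ a) (hux : u x ≤ ENNReal.ofReal (Real.exp a)) :
    ∫⁻ s in Set.Ioc (0 : ℝ) 1, entropyIntegrand (u (AffineMap.lineMap x y s))
      ≤ ENNReal.ofReal (1 + a) * (u y + ENNReal.ofReal (Real.exp a)) := by
  rcases eq_or_ne (u y) ⊤ with huy | huy
  · rw [huy, top_add, ENNReal.mul_top (by simp; linarith)]
    exact le_top
  obtain ⟨b, hb, hexp⟩ : ∃ b, 0 ≤ b ∧ Real.exp (a + b) = max (u y).toReal (Real.exp a) := by
    have hlog := Real.exp_log ((Real.exp_pos a).trans_le (le_max_right (u y).toReal _))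
    refine ⟨Real.log (max (u y).toReal (Real.exp a)) - a, ?_, by rwa [add_sub_cancel]⟩
    rw [sub_nonneg, ← Real.exp_le_exp, hlog]
    exact le_max_right _ _
  have hmax : ENNReal.ofReal (Real.exp (a + b)) = max (u y) (ENNReal.ofReal (Real.exp a)) := by
    rw [hexp, ENNReal.ofReal_max, ENNReal.ofReal_toReal huy]
  calc ∫⁻ s in Set.Ioc (0 : ℝ) 1, entropyIntegrand (u (AffineMap.lineMap x y s))
      ≤ ∫⁻ s in Set.Ioc (0 : ℝ) 1,
          ENNReal.ofReal (Real.exp (a + s * b) * (1 + (a + s * b))) := by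
        refine setLIntegral_mono' measurableSet_Ioc fun s hs => ENNReal.ofReal_le_ofReal ?_
        have hle := hu.apply_lineMap_le_ofReal_exp hx hy hux (hmax ▸ le_max_left _ _)
          (Set.Ioc_subset_Icc_self hs)
        have hexp₁ : 1 ≤ Real.exp (a + s * b) :=
          Real.one_le_exp (add_nonneg ha (mul_nonneg hs.1.le hb))
        simpa only [Real.log_exp] using klFun_le_mul_one_add_log ENNReal.toReal_nonneg
          (ENNReal.toReal_le_of_le_ofReal (Real.exp_pos _).le hle) hexp₁
    _ ≤ ENNReal.ofReal ((1 + a) * Real.exp (a + b)) := lintegral_Ioc_exp_mul_le ha hb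
    _ ≤ ENNReal.ofReal (1 + a) * (u y + ENNReal.ofReal (Real.exp a)) := by
        rw [ENNReal.ofReal_mul (by positivity), hmax]
        gcongr
        exact max_le le_self_add le_add_self

end LogConvexOn

lemma le_min_add_entropyIntegrand_div {y : ℝ≥0∞} (hy : y ≠ ⊤) {j : ℕ} (hj : j ≠ 0) :
    y ≤ min y (ENNReal.ofReal (Real.exp (j + 1))) + entropyIntegrand y / j := by
  rcases le_total y (ENNReal.ofReal (Real.exp (j + 1))) with h | h
  · rw [min_eq_left h]
    exact le_self_add
  refine le_trans ?_ le_add_self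
  have hexp : Real.exp (j + 1) ≤ y.toReal := (ENNReal.ofReal_le_iff_le_toReal hy).1 h
  have hlog : j + 1 ≤ Real.log y.toReal :=
    (Real.le_log_iff_exp_le ((Real.exp_pos _).trans_le hexp)).2 hexp
  rw [ENNReal.le_div_iff_mul_le (by simp [hj]) (by simp)]
  calc y * j = ENNReal.ofReal (y.toReal * j) := by
        rw [ENNReal.ofReal_mul ENNReal.toReal_nonneg, ENNReal.ofReal_toReal hy,
          ENNReal.ofReal_natCast]
    _ ≤ entropyIntegrand y := by
        refine ENNReal.ofReal_le_ofReal ?_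
        rw [klFun_apply]
        nlinarith [mul_le_mul_of_nonneg_left hlog (ENNReal.toReal_nonneg (a := y))]

section Integral

variable {α : Type*} [MeasurableSpace α] {μ : Measure α}

lemma lintegral_le_lintegral_min_add_div {f : α → ℝ≥0∞} (hm : AEMeasurable f μ)
    (hfin : ∀ᵐ x ∂μ, f x ≠ ⊤) {j : ℕ} (hj : j ≠ 0) :
    ∫⁻ x, f x ∂μ ≤ ∫⁻ x, min (f x) (ENNReal.ofReal (Real.exp (j + 1))) ∂μ
      + (∫⁻ x, entropyIntegrand (f x) ∂μ) / j := by
  have hdiv : (∫⁻ x, entropyIntegrand (f x) ∂μ) / j = ∫⁻ x, entropyIntegrand (f x) / j ∂μ := by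
    simp only [div_eq_mul_inv]
    rw [lintegral_mul_const' _ _ (by simp [hj])]
  rw [hdiv, ← lintegral_add_left' (hm.min aemeasurable_const)]
  exact lintegral_mono_ae (hfin.mono fun x hx => le_min_add_entropyIntegrand_div hx hj)

/- A bound on the entropies makes the sequence uniformly integrable, so no mass is lost. -/
lemma lintegral_eq_of_tendsto_of_lintegral_entropyIntegrand_le [IsFiniteMeasure μ]
    {f : ℕ → α → ℝ≥0∞} {w : α → ℝ≥0∞} (hm : ∀ k, AEMeasurable (f k) μ)
    (hlim : ∀ᵐ x ∂μ, Tendsto (fun k => f k x) atTop (𝓝 (w x))) {m B : ℝ≥0∞} (hm_top : m ≠ ⊤)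
    (hB : B ≠ ⊤) (hmass : ∀ k, ∫⁻ x, f k x ∂μ = m)
    (hent : ∀ k, ∫⁻ x, entropyIntegrand (f k x) ∂μ ≤ B) : ∫⁻ x, w x ∂μ = m := by
  apply le_antisymm
  · calc ∫⁻ x, w x ∂μ = ∫⁻ x, liminf (fun k => f k x) atTop ∂μ :=
          lintegral_congr_ae (hlim.mono fun x hx => hx.liminf_eq.symm)
      _ ≤ liminf (fun k => ∫⁻ x, f k x ∂μ) atTop := lintegral_liminf_le' hm
      _ = m := by simp only [hmass, liminf_const]
  have hle (j : ℕ) (hj : j ≠ 0) : m ≤ ∫⁻ x, w x ∂μ + B / j := by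
    set M := ENNReal.ofReal (Real.exp (j + 1))
    have htrunc : Tendsto (fun k => ∫⁻ x, min (f k x) M ∂μ) atTop (𝓝 (∫⁻ x, min (w x) M ∂μ)) := by
      refine tendsto_lintegral_of_dominated_convergence' (fun _ => M)
        (fun k => (hm k).min aemeasurable_const)
        (fun k => Eventually.of_forall fun x => min_le_right _ _) ?_
        (hlim.mono fun x hx => hx.min tendsto_const_nhds)
      rw [lintegral_const]
      exact ENNReal.mul_ne_top ENNReal.ofReal_ne_top (measure_ne_top _ _)
    refine (ge_of_tendsto (htrunc.add_const (B / j)) (Eventually.of_forall fun k => ?_)).trans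
      (by gcongr; exact min_le_left _ _)
    have hfin : ∀ᵐ x ∂μ, f k x ≠ ⊤ :=
      (ae_lt_top' (hm k) (hmass k ▸ hm_top)).mono fun x hx => hx.ne
    rw [← hmass k]
    exact (lintegral_le_lintegral_min_add_div (hm k) hfin hj).trans (by gcongr; exact hent k)
  have hzero : Tendsto (fun j : ℕ => B / (j : ℝ≥0∞)) atTop (𝓝 0) := by
    simpa using ENNReal.Tendsto.const_div ENNReal.tendsto_nat_nhds_top (Or.inr hB)
  have hsum := hzero.const_add (∫⁻ x, w x ∂μ)
  rw [add_zero] at hsum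
  exact ge_of_tendsto hsum ((eventually_ne_atTop 0).mono hle)

lemma ofReal_neg_xlogx_add_entropyIntegrand_add {y : ℝ≥0∞} (hy : y ≠ ⊤) :
    ENNReal.ofReal (-xlogx y) + entropyIntegrand y + y = ENNReal.ofReal (xlogx y) + 1 := by
  have hkl := klFun_nonneg (ENNReal.toReal_nonneg (a := y))
  have hy₀ := ENNReal.toReal_nonneg (a := y)
  have hx : klFun y.toReal = xlogx y + 1 - y.toReal := klFun_apply _
  rw [entropyIntegrand]
  nth_rw 3 [← ENNReal.ofReal_toReal hy]
  rw [add_assoc, ← ENNReal.ofReal_add hkl hy₀, hx, sub_add_cancel, ← ENNReal.ofReal_one]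
  rcases le_total 0 (xlogx y) with h | h
  · rw [ENNReal.ofReal_of_nonpos (neg_nonpos.2 h), zero_add, ENNReal.ofReal_add h zero_le_one]
  · rw [ENNReal.ofReal_of_nonpos h, zero_add, ← ENNReal.ofReal_add (neg_nonneg.2 h) (by linarith),
      neg_add_cancel_left]

lemma ofReal_neg_xlogx_le_one (y : ℝ≥0∞) : ENNReal.ofReal (-xlogx y) ≤ 1 := by
  have hkl := klFun_nonneg (ENNReal.toReal_nonneg (a := y))
  rw [klFun_apply] at hkl
  refine ENNReal.ofReal_le_one.2 ?_
  rw [xlogx]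
  linarith [ENNReal.toReal_nonneg (a := y)]

lemma measurable_xlogx : Measurable xlogx :=
  ENNReal.measurable_toReal.mul (Real.measurable_log.comp ENNReal.measurable_toReal)

lemma lintegral_neg_xlogx_sub_lintegral_xlogx [IsFiniteMeasure μ] {f : α → ℝ≥0∞}
    (hm : AEMeasurable f μ) (hmass : ∫⁻ x, f x ∂μ = μ Set.univ) :
    ((∫⁻ x, ENNReal.ofReal (-xlogx (f x)) ∂μ : ℝ≥0∞) : EReal)
      - ((∫⁻ x, ENNReal.ofReal (xlogx (f x)) ∂μ : ℝ≥0∞) : EReal)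
      = -((∫⁻ x, entropyIntegrand (f x) ∂μ : ℝ≥0∞) : EReal) := by
  have hneg : AEMeasurable (fun x => ENNReal.ofReal (-xlogx (f x))) μ :=
    (measurable_xlogx.comp_aemeasurable hm).neg.ennreal_ofReal
  have hfin : ∀ᵐ x ∂μ, f x ≠ ⊤ :=
    (ae_lt_top' hm (hmass ▸ measure_ne_top _ _)).mono fun x hx => hx.ne
  have hadd : ∫⁻ x, ENNReal.ofReal (-xlogx (f x)) ∂μ + ∫⁻ x, entropyIntegrand (f x) ∂μ
      = ∫⁻ x, ENNReal.ofReal (xlogx (f x)) ∂μ := by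
    refine (ENNReal.add_left_inj (measure_ne_top μ Set.univ)).1 ?_
    nth_rw 1 [← hmass]
    rw [← lintegral_add_left' hneg, ← lintegral_add_right' _ hm, ← lintegral_one,
      ← lintegral_add_right _ measurable_const]
    exact lintegral_congr_ae (hfin.mono fun x hx => ofReal_neg_xlogx_add_entropyIntegrand_add hx)
  have hneg_top : ∫⁻ x, ENNReal.ofReal (-xlogx (f x)) ∂μ ≠ ⊤ := by
    refine ((lintegral_mono fun x => ofReal_neg_xlogx_le_one (f x)).trans_lt ?_).ne
    rw [lintegral_one]
    exact measure_lt_top _ _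
  lift ∫⁻ x, ENNReal.ofReal (-xlogx (f x)) ∂μ to ℝ≥0 using hneg_top with a
  rw [← hadd, EReal.coe_ennreal_add]
  generalize ∫⁻ x, entropyIntegrand (f x) ∂μ = b
  induction b with
  | top => rfl
  | coe b =>
    rw [EReal.coe_nnreal_eq_coe_real, EReal.coe_nnreal_eq_coe_real, ← EReal.coe_add,
      ← EReal.coe_sub, sub_add_cancel_left, EReal.coe_neg]

end Integral

/-! ### Systems on convex bodies -/

section ConeMeasure

variable {n : ℕ} {P : Set (Euc n)} {ν : Measure (Euc n)} {x₀ : Euc n}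

lemma ae_coneMeasure_mem_interior (hP : Convex ℝ P) (hx₀ : x₀ ∈ interior P)
    (hν : ∀ᵐ y ∂ν, y ∈ P) : ∀ᵐ x ∂coneMeasure x₀ ν, x ∈ interior P := by
  have hcompl : MeasurableSet (interior P)ᶜ := measurableSet_interior.compl
  change coneMeasure x₀ ν (interior P)ᶜ = 0
  rw [← lintegral_indicator_one hcompl, lintegral_coneMeasure _ _ (measurable_one.indicator hcompl)]
  refine lintegral_eq_zero_of_ae_eq_zero (hν.mono fun y hy => ?_)
  rw [← restrict_Ioo_eq_restrict_Ioc]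
  refine setLIntegral_eq_zero measurableSet_Ioo fun s hs => ?_
  exact Set.indicator_of_notMem (not_not.2 (lineMap_mem_interior hP hx₀ hy hs)) _

lemma LogConvexOn.lintegral_entropyIntegrand_coneMeasure_le {u : Euc n → ℝ≥0∞} {a : ℝ}
    (hu : LogConvexOn P u) (hlsc : LowerSemicontinuousOn u P) (hP : Convex ℝ P) (hPc : IsClosed P)
    (hx₀ : x₀ ∈ interior P) (hν : ∀ᵐ y ∂ν, y ∈ P) (ha : 0 ≤ a)
    (hux₀ : u x₀ ≤ ENNReal.ofReal (Real.exp a)) :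
    ∫⁻ x, entropyIntegrand (u x) ∂coneMeasure x₀ ν ≤
      ENNReal.ofReal (1 + a) * (∫⁻ y, u y ∂ν + ENNReal.ofReal (Real.exp a) * ν Set.univ) := by
  have hmeas : Measurable fun x => entropyIntegrand (P.indicator u x) :=
    measurable_entropyIntegrand.comp
      (measurable_indicator_of_lowerSemicontinuousOn hlsc hPc.measurableSet)
  have hmem := interior_subset hx₀
  calc ∫⁻ x, entropyIntegrand (u x) ∂coneMeasure x₀ ν
      = ∫⁻ x, entropyIntegrand (P.indicator u x) ∂coneMeasure x₀ ν :=
        lintegral_congr_ae ((ae_coneMeasure_mem_interior hP hx₀ hν).mono fun x hx => by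
          simp only [Set.indicator_of_mem (interior_subset hx)])
    _ = ∫⁻ y, (∫⁻ s in Set.Ioc (0 : ℝ) 1,
          entropyIntegrand (P.indicator u (AffineMap.lineMap x₀ y s))) ∂ν :=
        lintegral_coneMeasure _ _ hmeas
    _ ≤ ∫⁻ y, ENNReal.ofReal (1 + a) * (u y + ENNReal.ofReal (Real.exp a)) ∂ν := by
        refine lintegral_mono_ae (hν.mono fun y hy => ?_)
        refine le_trans (le_of_eq ?_) (hu.lintegral_entropyIntegrand_lineMap_le hmem hy ha hux₀)
        exact setLIntegral_congr_fun measurableSet_Ioc fun s hs => by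
          rw [Set.indicator_of_mem (hP.lineMap_mem hmem hy (Set.Ioc_subset_Icc_self hs))]
    _ = ENNReal.ofReal (1 + a) * (∫⁻ y, u y ∂ν + ENNReal.ofReal (Real.exp a) * ν Set.univ) := by
        rw [lintegral_const_mul' _ _ ENNReal.ofReal_ne_top, lintegral_add_right _ measurable_const,
          lintegral_const]

end ConeMeasure

/-- A system on a convex body `P` which need not be a polytope. The bulk measure `μ` only has to
dominate a multiple of Lebesgue measure on `P` and to be dominated by a multiple of the cone over
the boundary measure `σ`, with apex an interior point; the apex may carry an atom. -/
structure ConvexSystem (n : ℕ) where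
  P : Set (Euc n)
  μ : Measure (Euc n)
  σ : Measure (Euc n)
  isClosed : IsClosed P
  convex : Convex ℝ P
  exists_smul_volume_restrict_le : ∃ c : ℝ≥0, 0 < c ∧ c • volume.restrict P ≤ μ
  measure_frontier_ne_top : σ (frontier P) ≠ ⊤
  exists_le_smul_coneMeasure : ∃ x₀ ∈ interior P, ∃ C : ℝ≥0,
    μ ≤ C • (Measure.dirac x₀ + coneMeasure x₀ (σ.restrict (frontier P)))

namespace ConvexSystem

variable {n : ℕ} (S : ConvexSystem n)

/-- The space `ℳ^{exp,1}(P)` of lower semicontinuous log-convex densities of mean `1`. -/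
def densities : Set (Euc n → ℝ≥0∞) :=
  {u | LowerSemicontinuousOn u S.P ∧ (∀ x ∈ S.P, 0 < u x) ∧ LogConvexOn S.P u ∧
    ∫⁻ x, u x ∂S.μ = S.μ Set.univ}

/-- The internal energy `U(u) = (1/μ(P)) ∫_{∂P} u dσ`. -/
def energy (u : Euc n → ℝ≥0∞) : ℝ≥0∞ := (S.μ Set.univ)⁻¹ * ∫⁻ y in frontier S.P, u y ∂S.σ

/-- The entropy `S(u) = -(1/μ(P)) ∫_P u log u dμ`, as a difference of its positive and negative
parts. -/
def entropy (u : Euc n → ℝ≥0∞) : EReal :=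
  (((S.μ Set.univ).toReal⁻¹ : ℝ) : EReal) *
    (((∫⁻ x, ENNReal.ofReal (-xlogx (u x)) ∂S.μ : ℝ≥0∞) : EReal)
      - ((∫⁻ x, ENNReal.ofReal (xlogx (u x)) ∂S.μ : ℝ≥0∞) : EReal))

/-- The relative entropy `∫ (u log u + 1 - u) dμ ∈ [0, ∞]`, which on densities is `-μ(P)` times the
entropy. -/
def relEntropy (u : Euc n → ℝ≥0∞) : ℝ≥0∞ := ∫⁻ x, entropyIntegrand (u x) ∂S.μ

lemma ae_restrict_frontier_mem : ∀ᵐ y ∂S.σ.restrict (frontier S.P), y ∈ S.P :=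
  (ae_restrict_mem measurableSet_frontier).mono fun _ hy => S.isClosed.frontier_subset hy

lemma ae_mem_interior : ∀ᵐ x ∂S.μ, x ∈ interior S.P := by
  obtain ⟨x₀, hx₀, C, hC⟩ := S.exists_le_smul_coneMeasure
  refine ae_mono hC (Measure.ae_smul_measure (ae_add_measure_iff.2 ⟨?_, ?_⟩) C)
  · exact (ae_dirac_iff measurableSet_interior).2 hx₀
  · exact ae_coneMeasure_mem_interior S.convex hx₀ S.ae_restrict_frontier_mem

lemma ae_mem : ∀ᵐ x ∂S.μ, x ∈ S.P := S.ae_mem_interior.mono fun _ hx => interior_subset hx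

instance : IsFiniteMeasure S.μ := by
  obtain ⟨x₀, -, C, hC⟩ := S.exists_le_smul_coneMeasure
  have : IsFiniteMeasure (S.σ.restrict (frontier S.P)) :=
    isFiniteMeasure_restrict.2 S.measure_frontier_ne_top
  have : IsFiniteMeasure (coneMeasure x₀ (S.σ.restrict (frontier S.P))) := by
    unfold coneMeasure
    infer_instance
  exact isFiniteMeasure_of_le _ hC

lemma measure_ne_zero_of_isOpen {O : Set (Euc n)} (hO : IsOpen O) (hne : O.Nonempty)
    (hOP : O ⊆ S.P) : S.μ O ≠ 0 := by
  obtain ⟨c, hc, hle⟩ := S.exists_smul_volume_restrict_le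
  refine ne_bot_of_le_ne_bot ?_ (hle O)
  rw [Measure.smul_apply, Measure.restrict_eq_self _ hOP]
  exact smul_ne_zero hc.ne' (hO.measure_ne_zero volume hne)

lemma measure_univ_ne_zero : S.μ Set.univ ≠ 0 := by
  obtain ⟨x₀, hx₀, -⟩ := S.exists_le_smul_coneMeasure
  exact ne_bot_of_le_ne_bot
    (S.measure_ne_zero_of_isOpen isOpen_interior ⟨x₀, hx₀⟩ interior_subset)
    (measure_mono (Set.subset_univ _))

lemma inv_measure_univ_ne_zero : (S.μ Set.univ)⁻¹ ≠ 0 :=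
  ENNReal.inv_ne_zero.2 (measure_ne_top _ _)

lemma inv_measure_univ_ne_top : (S.μ Set.univ)⁻¹ ≠ ⊤ :=
  ENNReal.inv_ne_top.2 S.measure_univ_ne_zero

lemma measure_univ_mul_energy (u : Euc n → ℝ≥0∞) :
    S.μ Set.univ * S.energy u = ∫⁻ y in frontier S.P, u y ∂S.σ :=
  ENNReal.mul_inv_cancel_left S.measure_univ_ne_zero (measure_ne_top _ _)

lemma energy_one_ne_top : S.energy 1 ≠ ⊤ := by
  refine ENNReal.mul_ne_top S.inv_measure_univ_ne_top ?_
  simpa using S.measure_frontier_ne_top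

lemma relEntropy_one : S.relEntropy 1 = 0 := by
  simp [relEntropy, entropyIntegrand_one]

lemma one_mem_densities : 1 ∈ S.densities :=
  ⟨lowerSemicontinuousOn_const, fun _ _ => one_pos, fun _ _ _ _ _ _ _ => by simp,
    lintegral_one⟩

variable {S} {u v : Euc n → ℝ≥0∞} {c : ℝ≥0∞}

lemma aemeasurable_of_mem_densities (hu : u ∈ S.densities) : AEMeasurable u S.μ :=
  aemeasurable_of_lowerSemicontinuousOn hu.1 S.isClosed.measurableSet S.ae_mem

lemma aemeasurable_restrict_frontier_of_mem_densities (hu : u ∈ S.densities) :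
    AEMeasurable u (S.σ.restrict (frontier S.P)) :=
  aemeasurable_of_lowerSemicontinuousOn hu.1 S.isClosed.measurableSet S.ae_restrict_frontier_mem

lemma logConvexOn_interior_of_mem_densities (hu : u ∈ S.densities) :
    LogConvexOn (interior S.P) u :=
  hu.2.2.1.mono interior_subset

variable (S) in
lemma exists_apply_le_of_mem_interior {x : Euc n} (hx : x ∈ interior S.P) :
    ∃ B : ℝ≥0, ∀ u ∈ S.densities, u x ≤ B := by
  obtain ⟨c, hc, hle⟩ := S.exists_smul_volume_restrict_le
  obtain ⟨r, hr, hball⟩ := Metric.isOpen_iff.1 isOpen_interior x hx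
  replace hball := hball.trans interior_subset
  have hvol : c * volume (Metric.ball x r) ≠ 0 :=
    mul_ne_zero (ENNReal.coe_ne_zero.2 hc.ne') (Metric.measure_ball_pos _ _ hr).ne'
  have hvol_top : c * volume (Metric.ball x r) ≠ ⊤ :=
    ENNReal.mul_ne_top ENNReal.coe_ne_top measure_ball_lt_top.ne
  have hB : 2 * S.μ Set.univ / (c * volume (Metric.ball x r)) ≠ ⊤ :=
    ENNReal.div_ne_top (ENNReal.mul_ne_top ENNReal.ofNat_ne_top (measure_ne_top _ _)) hvol
  refine ⟨(2 * S.μ Set.univ / (c * volume (Metric.ball x r))).toNNReal, fun u hu => ?_⟩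
  rw [ENNReal.coe_toNNReal hB, ENNReal.le_div_iff_mul_le (.inl hvol) (.inl hvol_top)]
  have hmeas : AEMeasurable u (volume.restrict (Metric.ball x r)) :=
    aemeasurable_of_lowerSemicontinuousOn hu.1 S.isClosed.measurableSet
      ((ae_restrict_mem measurableSet_ball).mono fun _ hy => hball hy)
  calc u x * (c * volume (Metric.ball x r)) = c * (volume (Metric.ball x r) * u x) := by ring
    _ ≤ c * (2 * ∫⁻ y in Metric.ball x r, u y) :=
        mul_le_mul_right ((hu.2.2.1.mono hball).volume_ball_mul_le hmeas) _
    _ ≤ c * (2 * ∫⁻ y in S.P, u y) := by gcongr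
    _ = 2 * ∫⁻ y, u y ∂(c • volume.restrict S.P) := by
        rw [lintegral_smul_measure, ENNReal.smul_def, smul_eq_mul, mul_left_comm]
    _ ≤ 2 * ∫⁻ y, u y ∂S.μ := by gcongr
    _ = 2 * S.μ Set.univ := by rw [hu.2.2.2]

lemma apply_ne_top_of_mem_interior (hu : u ∈ S.densities) {x : Euc n} (hx : x ∈ interior S.P) :
    u x ≠ ⊤ := by
  obtain ⟨B, hB⟩ := S.exists_apply_le_of_mem_interior hx
  exact ne_top_of_le_ne_top ENNReal.coe_ne_top (hB u hu)

lemma ae_ne_top (hu : u ∈ S.densities) : ∀ᵐ x ∂S.μ, u x ≠ ⊤ :=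
  S.ae_mem_interior.mono fun _ hx => apply_ne_top_of_mem_interior hu hx

variable (S) in
lemma exists_relEntropy_le_of_energy_le (hc : c ≠ ⊤) :
    ∃ B ≠ ⊤, ∀ u ∈ S.densities, S.energy u ≤ c → S.relEntropy u ≤ B := by
  obtain ⟨x₀, hx₀, C, hC⟩ := S.exists_le_smul_coneMeasure
  obtain ⟨b, hb⟩ := S.exists_apply_le_of_mem_interior hx₀
  set ν := S.σ.restrict (frontier S.P)
  set M : ℝ≥0∞ := ENNReal.ofReal (Real.exp b)
  have hbM : (b : ℝ≥0∞) ≤ M := by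
    rw [← ENNReal.ofReal_coe_nnreal]
    exact ENNReal.ofReal_le_ofReal (by linarith [Real.add_one_le_exp (b : ℝ)])
  refine ⟨C * (ENNReal.ofReal (Real.exp b * (1 + b))
    + ENNReal.ofReal (1 + b) * (S.μ Set.univ * c + M * ν Set.univ)), ?_, fun u hu huc => ?_⟩
  · have hν : ν Set.univ ≠ ⊤ := by simpa [ν] using S.measure_frontier_ne_top
    have hμ := measure_ne_top S.μ Set.univ
    finiteness
  have hux₀ : u x₀ ≤ M := (hb u hu).trans hbM
  have hapex : entropyIntegrand (u x₀) ≤ ENNReal.ofReal (Real.exp b * (1 + b)) := by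
    refine ENNReal.ofReal_le_ofReal ?_
    simpa only [Real.log_exp] using klFun_le_mul_one_add_log ENNReal.toReal_nonneg
      (ENNReal.toReal_le_of_le_ofReal (Real.exp_pos _).le hux₀) (Real.one_le_exp b.coe_nonneg)
  calc S.relEntropy u
      ≤ ∫⁻ x, entropyIntegrand (u x) ∂(C • (Measure.dirac x₀ + coneMeasure x₀ ν)) :=
        lintegral_mono' hC le_rfl
    _ = C * (entropyIntegrand (u x₀) + ∫⁻ x, entropyIntegrand (u x) ∂coneMeasure x₀ ν) := by
        rw [lintegral_smul_measure, lintegral_add_measure, lintegral_dirac, ENNReal.smul_def,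
          smul_eq_mul]
    _ ≤ _ := by
        gcongr
        refine (hu.2.2.1.lintegral_entropyIntegrand_coneMeasure_le hu.1 S.convex S.isClosed hx₀
          S.ae_restrict_frontier_mem b.coe_nonneg hux₀).trans ?_
        rw [← S.measure_univ_mul_energy]
        gcongr

lemma entropy_eq_neg_relEntropy (hu : u ∈ S.densities) :
    S.entropy u = -(((S.μ Set.univ)⁻¹ * S.relEntropy u : ℝ≥0∞) : EReal) := by
  rw [entropy, lintegral_neg_xlogx_sub_lintegral_xlogx (aemeasurable_of_mem_densities hu) hu.2.2.2,
    ← ENNReal.toReal_inv, EReal.coe_ennreal_toReal S.inv_measure_univ_ne_top, mul_neg,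
    EReal.coe_ennreal_mul]
  rfl

lemma entropy_le_entropy_iff (hu : u ∈ S.densities) (hv : v ∈ S.densities) :
    S.entropy u ≤ S.entropy v ↔ S.relEntropy v ≤ S.relEntropy u := by
  rw [entropy_eq_neg_relEntropy hu, entropy_eq_neg_relEntropy hv, EReal.neg_le_neg_iff,
    EReal.coe_ennreal_le_coe_ennreal_iff,
    ENNReal.mul_le_mul_iff_right S.inv_measure_univ_ne_zero S.inv_measure_univ_ne_top]

variable {w : Euc n → ℝ≥0∞}

/-! ### Mixtures of densities -/

lemma convex_densities : Convex ℝ≥0 S.densities := by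
  intro u hu v hv a b _ _ hab
  have hlsc (a : ℝ≥0) {u : Euc n → ℝ≥0∞} (hu : LowerSemicontinuousOn u S.P) :
      LowerSemicontinuousOn (a • u) S.P :=
    (ENNReal.continuous_const_mul ENNReal.coe_ne_top).comp_lowerSemicontinuousOn hu
      fun _ _ h => mul_le_mul_right h _
  refine ⟨(hlsc a hu.1).add (hlsc b hv.1), fun x hx => ?_,
    (hu.2.2.1.const_smul a).add (hv.2.2.1.const_smul b), ?_⟩
  · refine pos_iff_ne_zero.2 fun h₀ => ?_
    have h₁ : a • u x = 0 ∧ b • v x = 0 := add_eq_zero.1 h₀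
    have ha : a = 0 := (smul_eq_zero.1 h₁.1).resolve_right (hu.2.1 x hx).ne'
    have hb : b = 0 := (smul_eq_zero.1 h₁.2).resolve_right (hv.2.1 x hx).ne'
    simp [ha, hb] at hab
  · calc ∫⁻ x, (a • u + b • v) x ∂S.μ = a * ∫⁻ x, u x ∂S.μ + b * ∫⁻ x, v x ∂S.μ := by
          rw [← lintegral_const_mul' _ _ ENNReal.coe_ne_top,
            ← lintegral_const_mul' _ _ ENNReal.coe_ne_top,
            ← lintegral_add_left' ((aemeasurable_of_mem_densities hu).const_mul _)]
          rfl
      _ = S.μ Set.univ := by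
          rw [hu.2.2.2, hv.2.2.2, ← add_mul, ← ENNReal.coe_add, hab, ENNReal.coe_one, one_mul]

lemma energy_smul_add_smul (hu : u ∈ S.densities) (v : Euc n → ℝ≥0∞) (a b : ℝ≥0) :
    S.energy (a • u + b • v) = a * S.energy u + b * S.energy v := by
  rw [energy, energy, energy, mul_left_comm, mul_left_comm (b : ℝ≥0∞), ← mul_add,
    ← lintegral_const_mul' _ _ ENNReal.coe_ne_top, ← lintegral_const_mul' _ _ ENNReal.coe_ne_top,
    ← lintegral_add_left' ((aemeasurable_restrict_frontier_of_mem_densities hu).const_mul _)]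
  rfl

lemma aemeasurable_entropyIntegrand (hu : u ∈ S.densities) :
    AEMeasurable (fun x => entropyIntegrand (u x)) S.μ :=
  measurable_entropyIntegrand.comp_aemeasurable (aemeasurable_of_mem_densities hu)

lemma lintegral_smul_entropyIntegrand_add (hu : u ∈ S.densities) (v : Euc n → ℝ≥0∞) (a b : ℝ≥0) :
    ∫⁻ x, (a • entropyIntegrand (u x) + b • entropyIntegrand (v x)) ∂S.μ =
      a • S.relEntropy u + b • S.relEntropy v := by
  rw [lintegral_add_left' (f := fun x => a • entropyIntegrand (u x))
    ((aemeasurable_entropyIntegrand hu).const_smul a)]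
  exact congrArg₂ (· + ·) (lintegral_const_mul' _ _ ENNReal.coe_ne_top)
    (lintegral_const_mul' _ _ ENNReal.coe_ne_top)

lemma convexOn_relEntropy : ConvexOn ℝ≥0 S.densities S.relEntropy := by
  refine ⟨convex_densities, fun u hu v hv a b ha hb hab => ?_⟩
  rw [← lintegral_smul_entropyIntegrand_add hu]
  refine lintegral_mono_ae ?_
  filter_upwards [ae_ne_top hu, ae_ne_top hv] with x hux hvx
  exact strictConvexOn_entropyIntegrand.convexOn.2 hux hvx ha hb hab

/- Mixing with the constant density `1` raises the energy and cannot lower the entropy. -/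
lemma exists_energy_eq_relEntropy_le (hu : u ∈ S.densities) (huc : S.energy u ≤ c)
    (hc : c ≤ S.energy 1) :
    ∃ v ∈ S.densities, S.energy v = c ∧ S.relEntropy v ≤ S.relEntropy u := by
  have hu_top : S.energy u ≠ ⊤ := ne_top_of_le_ne_top S.energy_one_ne_top (huc.trans hc)
  have hcont : Continuous fun t : ℝ≥0 => ((1 - t : ℝ≥0) : ℝ≥0∞) * S.energy u + t * S.energy 1 :=
    ((ENNReal.continuous_mul_const hu_top).comp
      (ENNReal.continuous_coe.comp (continuous_const.sub continuous_id))).add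
      ((ENNReal.continuous_mul_const S.energy_one_ne_top).comp ENNReal.continuous_coe)
  obtain ⟨t, ht, htc⟩ := intermediate_value_Icc zero_le_one hcont.continuousOn
    (show c ∈ _ by simpa using ⟨huc, hc⟩)
  have hsum : 1 - t + t = 1 := tsub_add_cancel_of_le ht.2
  refine ⟨(1 - t) • u + t • 1,
    convex_densities hu S.one_mem_densities zero_le zero_le hsum, ?_, ?_⟩
  · rw [energy_smul_add_smul hu]
    exact htc
  · calc S.relEntropy ((1 - t) • u + t • 1)
        ≤ (1 - t) • S.relEntropy u + t • S.relEntropy 1 :=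
          convexOn_relEntropy.2 hu S.one_mem_densities zero_le zero_le hsum
      _ ≤ S.relEntropy u := by
          rw [relEntropy_one, smul_zero, add_zero]
          exact mul_le_of_le_one_left' (ENNReal.coe_le_one_iff.2 tsub_le_self)

/-! ### Compactness of energy sublevels -/

/-- Convergence of densities: pointwise in the interior, and with a Fatou inequality up to the
boundary, where energy may be lost in the limit. -/
def TendstoDensity (S : ConvexSystem n) (u : ℕ → Euc n → ℝ≥0∞) (w : Euc n → ℝ≥0∞) : Prop :=
  (∀ x ∈ interior S.P, Tendsto (fun k => u k x) atTop (𝓝 (w x))) ∧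
    ∀ y ∈ S.P, w y ≤ liminf (fun k => u k y) atTop

lemma lintegral_eq_of_tendsto {u : ℕ → Euc n → ℝ≥0∞} (hu : ∀ k, u k ∈ S.densities) (hc : c ≠ ⊤)
    (huc : ∀ k, S.energy (u k) ≤ c)
    (hlim : ∀ x ∈ interior S.P, Tendsto (fun k => u k x) atTop (𝓝 (w x))) :
    ∫⁻ x, w x ∂S.μ = S.μ Set.univ := by
  obtain ⟨B, hB, hent⟩ := S.exists_relEntropy_le_of_energy_le hc
  exact lintegral_eq_of_tendsto_of_lintegral_entropyIntegrand_le
    (fun k => aemeasurable_of_mem_densities (hu k)) (S.ae_mem_interior.mono hlim)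
    (measure_ne_top _ _) hB (fun k => (hu k).2.2.2) fun k => hent _ (hu k) (huc k)

lemma tendstoDensity_radialEnvelope {u : ℕ → Euc n → ℝ≥0∞} {x₀ : Euc n}
    (hu : ∀ k, u k ∈ S.densities) (hx₀ : x₀ ∈ interior S.P) (hw : LogConvexOn (interior S.P) w)
    (hfin : ∀ x ∈ interior S.P, w x ≠ ⊤) (hpos : ∀ x ∈ interior S.P, w x ≠ 0)
    (hmass : ∫⁻ x, w x ∂S.μ = S.μ Set.univ)
    (hlim : ∀ x ∈ interior S.P, Tendsto (fun k => u k x) atTop (𝓝 (w x))) :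
    radialEnvelope w x₀ ∈ S.densities ∧ S.TendstoDensity u (radialEnvelope w x₀) := by
  have h₀ := hpos x₀ hx₀
  have heq {x : Euc n} (hx : x ∈ interior S.P) : radialEnvelope w x₀ x = w x :=
    hw.radialEnvelope_eq_of_mem_interior S.convex hfin hx₀ h₀ hx
  refine ⟨⟨hw.lowerSemicontinuousOn_radialEnvelope S.convex hfin hx₀ h₀,
    fun y hy => radialEnvelope_pos S.convex hfin hpos hx₀ hy,
    hw.logConvexOn_radialEnvelope S.convex hfin hx₀ h₀, ?_⟩, fun x hx => heq hx ▸ hlim x hx,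
    fun y hy => radialEnvelope_le_liminf S.convex (fun k => (hu k).2.2.1)
      (fun k => ((hu k).2.1 _ (interior_subset hx₀)).ne')
      (fun k => apply_ne_top_of_mem_interior (hu k) hx₀) hlim hfin h₀ hx₀ hy⟩
  rw [← hmass]
  exact lintegral_congr_ae (S.ae_mem_interior.mono fun x hx => heq hx)

lemma exists_subseq_tendstoDensity {u : ℕ → Euc n → ℝ≥0∞} (hu : ∀ k, u k ∈ S.densities)
    (hc : c ≠ ⊤) (huc : ∀ k, S.energy (u k) ≤ c) :
    ∃ φ : ℕ → ℕ, StrictMono φ ∧ ∃ w ∈ S.densities, S.TendstoDensity (fun k => u (φ k)) w := by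
  have hbdd (x) (hx : x ∈ interior S.P) : ⨆ k, u k x ≠ ⊤ := by
    obtain ⟨B, hB⟩ := S.exists_apply_le_of_mem_interior hx
    exact ne_top_of_le_ne_top ENNReal.coe_ne_top (iSup_le fun k => hB _ (hu k))
  obtain ⟨φ, hφ, w, hw, hfin, hlim⟩ := LogConvexOn.exists_subseq_tendsto
    (fun k => logConvexOn_interior_of_mem_densities (hu k)) S.convex.interior isOpen_interior hbdd
  have hmass := lintegral_eq_of_tendsto (fun k => hu (φ k)) hc (fun k => huc (φ k)) hlim
  have hpos (z) (hz : z ∈ interior S.P) : w z ≠ 0 := fun h₀ => S.measure_univ_ne_zero <| by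
    rw [← hmass]
    exact lintegral_eq_zero_of_ae_eq_zero <| S.ae_mem_interior.mono fun x hx =>
      hw.eq_zero_of_eq_zero isOpen_interior hz h₀ hx
  obtain ⟨x₀, hx₀, -⟩ := S.exists_le_smul_coneMeasure
  obtain ⟨hmem, htend⟩ :=
    tendstoDensity_radialEnvelope (fun k => hu (φ k)) hx₀ hw hfin hpos hmass hlim
  exact ⟨φ, hφ, _, hmem, htend⟩

lemma energy_le_liminf {u : ℕ → Euc n → ℝ≥0∞} (hu : ∀ k, u k ∈ S.densities)
    (h : S.TendstoDensity u w) : S.energy w ≤ liminf (fun k => S.energy (u k)) atTop := by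
  unfold energy
  rw [ENNReal.liminf_const_mul_of_ne_top S.inv_measure_univ_ne_top]
  gcongr
  calc ∫⁻ y in frontier S.P, w y ∂S.σ
      ≤ ∫⁻ y in frontier S.P, liminf (fun k => u k y) atTop ∂S.σ :=
        lintegral_mono_ae (S.ae_restrict_frontier_mem.mono h.2)
    _ ≤ liminf (fun k => ∫⁻ y in frontier S.P, u k y ∂S.σ) atTop :=
        lintegral_liminf_le' fun k => aemeasurable_restrict_frontier_of_mem_densities (hu k)

lemma relEntropy_le_liminf {u : ℕ → Euc n → ℝ≥0∞} (hu : ∀ k, u k ∈ S.densities)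
    (hw : w ∈ S.densities) (h : S.TendstoDensity u w) :
    S.relEntropy w ≤ liminf (fun k => S.relEntropy (u k)) atTop :=
  calc S.relEntropy w = ∫⁻ x, liminf (fun k => entropyIntegrand (u k x)) atTop ∂S.μ :=
        lintegral_congr_ae (S.ae_mem_interior.mono fun x hx =>
          ((continuousAt_entropyIntegrand (apply_ne_top_of_mem_interior hw hx)).tendsto.comp
            (h.1 x hx)).liminf_eq.symm)
    _ ≤ liminf (fun k => S.relEntropy (u k)) atTop :=
        lintegral_liminf_le' fun k => aemeasurable_entropyIntegrand (hu k)

lemma exists_isMinOn_of_le_liminf {F : (Euc n → ℝ≥0∞) → ℝ≥0∞}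
    (hF : ∀ u w, (∀ k, u k ∈ S.densities) → w ∈ S.densities → S.TendstoDensity u w →
      F w ≤ liminf (fun k => F (u k)) atTop)
    (hc : c ≠ ⊤) (hne : {u ∈ S.densities | S.energy u ≤ c}.Nonempty) :
    ∃ w ∈ {u ∈ S.densities | S.energy u ≤ c}, IsMinOn F {u ∈ S.densities | S.energy u ≤ c} w := by
  obtain ⟨s, -, hs, hmem⟩ := exists_seq_tendsto_sInf (hne.image F) (OrderBot.bddBelow _)
  choose u hu hus using hmem
  obtain rfl : s = fun k => F (u k) := funext fun k => (hus k).symm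
  obtain ⟨φ, hφ, w, hw, hlim⟩ :=
    exists_subseq_tendstoDensity (fun k => (hu k).1) hc fun k => (hu k).2
  have hφu (k) : u (φ k) ∈ S.densities := (hu (φ k)).1
  refine ⟨w, ⟨hw, ?_⟩, fun v hv => ?_⟩
  · exact (energy_le_liminf hφu hlim).trans
      ((liminf_le_liminf (.of_forall fun k => (hu (φ k)).2)).trans_eq (liminf_const c))
  · exact (hF _ _ hφu hw hlim).trans ((hs.comp hφ.tendsto_atTop).liminf_eq.trans_le
      (sInf_le (Set.mem_image_of_mem F hv)))

variable (S) in
lemma exists_isMinOn_energy : ∃ w ∈ S.densities, IsMinOn S.energy S.densities w := by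
  obtain ⟨w, hw, hmin⟩ := exists_isMinOn_of_le_liminf (F := S.energy)
    (fun _ _ hu _ h => energy_le_liminf hu h) S.energy_one_ne_top ⟨1, S.one_mem_densities, le_rfl⟩
  refine ⟨w, hw.1, fun v hv => ?_⟩
  rcases le_total (S.energy v) (S.energy 1) with h | h
  · exact hmin ⟨hv, h⟩
  · exact hw.2.trans h

lemma exists_isMinOn_relEntropy (hu : u ∈ S.densities) (huc : S.energy u ≤ c)
    (hc : c ≤ S.energy 1) :
    ∃ v ∈ {v ∈ S.densities | S.energy v = c},
      IsMinOn S.relEntropy {v ∈ S.densities | S.energy v = c} v := by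
  obtain ⟨w, hw, hmin⟩ := exists_isMinOn_of_le_liminf
    (fun _ _ hu hw h => relEntropy_le_liminf hu hw h)
    (ne_top_of_le_ne_top S.energy_one_ne_top hc) ⟨u, hu, huc⟩
  obtain ⟨v, hv, hvc, hle⟩ := exists_energy_eq_relEntropy_le hw.1 hw.2 hc
  exact ⟨v, ⟨hv, hvc⟩, fun v' hv' => hle.trans (hmin ⟨hv'.1, hv'.2.le⟩)⟩

/-! ### Uniqueness -/

lemma eqOn_of_ae_eq (hu : u ∈ S.densities) (hv : v ∈ S.densities) (h : u =ᵐ[S.μ] v) :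
    Set.EqOn u v S.P := by
  have hcont {u} (hu : u ∈ S.densities) : ContinuousOn u (interior S.P) :=
    (logConvexOn_interior_of_mem_densities hu).continuousOn S.convex.interior isOpen_interior
      fun x hx => apply_ne_top_of_mem_interior hu hx
  have hint : Set.EqOn u v (interior S.P) := by
    intro x hx
    by_contra hne
    have hO : IsOpen (interior S.P ∩ (fun x => (u x, v x)) ⁻¹' {p | p.1 ≠ p.2}) :=
      ((hcont hu).prodMk (hcont hv)).isOpen_inter_preimage isOpen_interior
        (isOpen_ne_fun continuous_fst continuous_snd)
    exact S.measure_ne_zero_of_isOpen hO ⟨x, hx, hne⟩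
      (Set.inter_subset_left.trans interior_subset)
      (measure_mono_null Set.inter_subset_right (ae_iff.1 h))
  obtain ⟨x₀, hx₀, -⟩ := S.exists_le_smul_coneMeasure
  intro y hy
  have henv {u} (hu : u ∈ S.densities) : radialEnvelope u x₀ y = u y :=
    hu.2.2.1.radialEnvelope_eq_of_lowerSemicontinuousOn S.convex hu.1 hx₀
      (hu.2.1 _ (interior_subset hx₀)).ne' (apply_ne_top_of_mem_interior hu hx₀) hy
  rw [← henv hu, ← henv hv]
  refine iSup_congr fun s => ?_
  rw [radialExtrapolation, radialExtrapolation, hint hx₀,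
    hint (lineMap_mem_interior S.convex hx₀ hy s.2)]

lemma ae_eq_of_relEntropy_le_midpoint (hu : u ∈ S.densities) (hv : v ∈ S.densities)
    (huv : S.relEntropy u = S.relEntropy v) (hfin : S.relEntropy u ≠ ⊤)
    (hmid : S.relEntropy u ≤ S.relEntropy ((2⁻¹ : ℝ≥0) • u + (2⁻¹ : ℝ≥0) • v)) :
    u =ᵐ[S.μ] v := by
  have hhalf : (2⁻¹ : ℝ≥0) + 2⁻¹ = 1 := by rw [← two_mul, mul_inv_cancel₀ two_ne_zero]
  have hint := lintegral_smul_entropyIntegrand_add hu v 2⁻¹ 2⁻¹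
  rw [← huv, ← add_smul, hhalf, one_smul] at hint
  have hle : ∀ᵐ x ∂S.μ, entropyIntegrand (((2⁻¹ : ℝ≥0) • u + (2⁻¹ : ℝ≥0) • v) x) ≤
      (2⁻¹ : ℝ≥0) • entropyIntegrand (u x) + (2⁻¹ : ℝ≥0) • entropyIntegrand (v x) := by
    filter_upwards [ae_ne_top hu, ae_ne_top hv] with x hux hvx
    exact strictConvexOn_entropyIntegrand.convexOn.2 hux hvx zero_le zero_le hhalf
  have heq := ae_eq_of_ae_le_of_lintegral_le hle
    (ne_top_of_le_ne_top (hint ▸ hfin) (lintegral_mono_ae hle))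
    (((aemeasurable_entropyIntegrand hu).const_smul _).add
      ((aemeasurable_entropyIntegrand hv).const_smul _)) (hint.trans_le hmid)
  filter_upwards [heq, ae_ne_top hu, ae_ne_top hv] with x hx hux hvx
  by_contra hne
  exact (strictConvexOn_entropyIntegrand.2 hux hvx hne (by positivity) (by positivity) hhalf).ne hx

lemma eqOn_of_isMinOn_relEntropy (hc : c ≠ ⊤) (hu : u ∈ {v ∈ S.densities | S.energy v = c})
    (hv : v ∈ {v ∈ S.densities | S.energy v = c})
    (hmin : IsMinOn S.relEntropy {v ∈ S.densities | S.energy v = c} u)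
    (hvu : S.relEntropy v ≤ S.relEntropy u) : Set.EqOn v u S.P := by
  have hhalf : (2⁻¹ : ℝ≥0) + 2⁻¹ = 1 := by rw [← two_mul, mul_inv_cancel₀ two_ne_zero]
  obtain ⟨B, hB, hent⟩ := S.exists_relEntropy_le_of_energy_le hc
  have hmid : (2⁻¹ : ℝ≥0) • u + (2⁻¹ : ℝ≥0) • v ∈ {v ∈ S.densities | S.energy v = c} := by
    refine ⟨convex_densities hu.1 hv.1 zero_le zero_le hhalf, ?_⟩
    rw [energy_smul_add_smul hu.1, hu.2, hv.2, ← add_mul, ← ENNReal.coe_add, hhalf,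
      ENNReal.coe_one, one_mul]
  exact (eqOn_of_ae_eq hu.1 hv.1 (ae_eq_of_relEntropy_le_midpoint hu.1 hv.1
    (le_antisymm (hmin hv) hvu) (ne_top_of_le_ne_top hB (hent u hu.1 hu.2.le)) (hmin hmid))).symm

/-! ### Equilibria -/

/-- An equilibrium of energy `U`: a density of maximal entropy among those of energy `U`. -/
def IsEquilibrium (S : ConvexSystem n) (U : ℝ≥0∞) (u : Euc n → ℝ≥0∞) : Prop :=
  u ∈ S.densities ∧ S.energy u = U ∧
    S.entropy u = sSup {s | ∃ v ∈ S.densities, S.energy v = U ∧ S.entropy v = s}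

lemma isEquilibrium_iff_isMinOn (hu : u ∈ {v ∈ S.densities | S.energy v = c}) :
    S.IsEquilibrium c u ↔ IsMinOn S.relEntropy {v ∈ S.densities | S.energy v = c} u := by
  rw [IsEquilibrium, and_iff_right hu.1, and_iff_right hu.2]
  constructor
  · intro h v hv
    rw [Set.mem_ofPred_eq, ← entropy_le_entropy_iff hv.1 hu.1, h]
    exact le_sSup ⟨v, hv.1, hv.2, rfl⟩
  · intro h
    refine le_antisymm (le_sSup ⟨u, hu.1, hu.2, rfl⟩) (sSup_le ?_)
    rintro _ ⟨v, hv, hvc, rfl⟩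
    exact (entropy_le_entropy_iff hv hu.1).2 (h ⟨hv, hvc⟩)

end ConvexSystem

theorem equilibrium_exists_unique_general {n : ℕ} (S : ConvexSystem n) :
    (∃ u ∈ S.densities, IsMinOn S.energy S.densities u) ∧
      ∀ U, (∃ u ∈ S.densities, S.energy u ≤ U) → U ≤ S.energy 1 →
        ∃ u, S.IsEquilibrium U u ∧ ∀ v, S.IsEquilibrium U v → Set.EqOn v u S.P := by
  refine ⟨S.exists_isMinOn_energy, ?_⟩
  rintro U ⟨u₀, hu₀, hu₀U⟩ hU
  obtain ⟨u, hu, hmin⟩ := ConvexSystem.exists_isMinOn_relEntropy hu₀ hu₀U hU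
  refine ⟨u, (ConvexSystem.isEquilibrium_iff_isMinOn hu).2 hmin, fun v hv => ?_⟩
  have hvU : v ∈ {v ∈ S.densities | S.energy v = U} := ⟨hv.1, hv.2.1⟩
  exact ConvexSystem.eqOn_of_isMinOn_relEntropy (ne_top_of_le_ne_top S.energy_one_ne_top hU)
    hu hvU hmin ((ConvexSystem.isEquilibrium_iff_isMinOn hvU).1 hv hu)

namespace NSystem

variable {n : ℕ} (S : NSystem n)

lemma isClosed : IsClosed S.P := S.simple.1.1.isClosed

lemma restrict_eq : S.μ.restrict S.P = S.μ := by
  obtain ⟨c, -, hμ⟩ := S.flat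
  rw [hμ, Measure.restrict_smul, Measure.restrict_restrict S.isClosed.measurableSet,
    Set.inter_self]

/-- The convex system underlying a system on a simple polytope. -/
def toConvexSystem : ConvexSystem n where
  P := S.P
  μ := S.μ
  σ := S.σ
  isClosed := S.isClosed
  convex := S.simple.1.convex
  exists_smul_volume_restrict_le := by
    obtain ⟨c, hc, hμ⟩ := S.flat
    exact ⟨c.toNNReal, Real.toNNReal_pos.2 hc, hμ.ge⟩
  measure_frontier_ne_top := S.simple.1.measure_frontier_ne_top S.flat_bdry
  exists_le_smul_coneMeasure := by
    obtain ⟨c, -, hμ⟩ := S.flat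
    obtain ⟨x₀, hx₀⟩ := S.simple.1.2.1
    obtain ⟨C, hC⟩ := S.simple.1.exists_volume_restrict_le_coneMeasure S.flat_bdry hx₀
    refine ⟨x₀, hx₀, c.toNNReal * C, ?_⟩
    rw [hμ, mul_smul]
    exact Measure.le_iff'.2 fun s => mul_le_mul_right (hC s) _

lemma measure_univ : S.μ Set.univ = S.μ S.P := by
  rw [← S.restrict_eq, Measure.restrict_apply_univ, S.restrict_eq]

lemma MExp_one_eq_densities : MExp S 1 = S.toConvexSystem.densities := by
  ext u
  have h : (∫⁻ x in S.P, u x ∂S.μ = S.μ S.P ∧ ∫⁻ x in S.P, u x ^ (1 : ℝ) ∂S.μ < ⊤) ↔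
      ∫⁻ x, u x ∂S.μ = S.μ Set.univ := by
    simp only [ENNReal.rpow_one, S.restrict_eq, ← S.measure_univ]
    exact and_iff_left_of_imp fun h => h.trans_lt (measure_lt_top S.toConvexSystem.μ _)
  exact and_congr_right fun _ => and_congr_right fun _ => and_congr_right fun _ => h

lemma Upf_eq_energy : Upf S = S.toConvexSystem.energy := by
  ext u
  rw [Upf, ← S.measure_univ]
  rfl

lemma Spf_eq_entropy : Spf S = S.toConvexSystem.entropy := by
  ext u
  rw [Spf, ← S.measure_univ, S.restrict_eq]
  rfl

end NSystem

/-- Existence and uniqueness of equilibria: the minimum of `U_𝒫` on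
`ℳ^{exp,1}(P)` is attained, and for every internal μ-energy
`U ∈ 𝔘_𝒫 = [min U_𝒫, U_𝒫(1_P)]` there is a unique `u ∈ ℳ^{exp,1}(P)` with
`U_𝒫(u) = U` maximizing the entropy `S_𝒫` on the level set `{U_𝒫 = U}`. -/
theorem equilibrium_exists_unique (n : ℕ) (S : NSystem n) :
    (∃ umin ∈ MExp S 1, ∀ u' ∈ MExp S 1, Upf S umin ≤ Upf S u') ∧
    ∀ umin ∈ MExp S 1, (∀ u' ∈ MExp S 1, Upf S umin ≤ Upf S u') →
      ∀ U : ℝ≥0∞, U ∈ Set.Icc (Upf S umin) (Upf S (fun _ => 1)) →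
        ∃ u, (u ∈ MExp S 1 ∧ Upf S u = U ∧
            Spf S u = sSup {s : EReal | ∃ u' ∈ MExp S 1, Upf S u' = U ∧ Spf S u' = s}) ∧
          ∀ v, (v ∈ MExp S 1 ∧ Upf S v = U ∧
              Spf S v = sSup {s : EReal | ∃ u' ∈ MExp S 1, Upf S u' = U ∧ Spf S u' = s}) →
            Set.EqOn v u S.P := by
  rw [S.MExp_one_eq_densities, S.Upf_eq_energy, S.Spf_eq_entropy]
  obtain ⟨hmin, hequil⟩ := equilibrium_exists_unique_general S.toConvexSystem
  exact ⟨hmin, fun umin humin _ U hU => hequil U ⟨umin, humin, hU.1⟩ hU.2⟩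

end
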